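/- arXiv:1810.12433 — 2 statements merged into one kernel-verified Lean document; each statement's English description precedes it below -/
import Mathlib

section
/- For every ε > 0 there exists C > 0 such that, whenever p ≥ C log n / n, the binomial random graph G_{n,p} asymptotically almost surely is ε-Pósa-resilient with respect to Hamiltonicity; that is, a.a.s. for every subgraph H ∈ H^ε_{n,p}(G_{n,p}), the graph G_{n,p} ∖ H contains a Hamilton cycle. -/
/-!
Write `F = G \ H`. The Pósa condition on `H` says that for every `θ ≤ 1/2` at most `θ n` vertices
lose more than about `(1 - θ - ε) n p` edges; since all degrees of `G` are at least about `n p`, at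
most `θ n` vertices have degree below about `(θ + ε) n p` in `F`.

For typical `G` and every such `H`, keeping each edge of `F` with a small constant probability `δ`
yields a subgraph `R` that inherits this degree profile, scaled by `δ`, and whose edge counts
between vertex sets are not much larger than expected. For every graph `Γ ⊇ R` and every longest
path of `Γ`, Pósa rotations then produce more than half of the vertices as first vertices of longest
paths with the same last vertex. As long as the set of first vertices is small, each round of
rotations at least doubles it. Once it has linear size, the original path is cut into a large
multiple of `log n` blocks; a path obtained by `O(log n)` rotations traverses most blocks unbroken,
so the neighbours of a first vertex in such a block all lie just after, or all lie just before, new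
first vertices. Hence the edges leaving the set of first vertices fit, block by block, into few
candidate sets, and comparing degrees with edge counts enlarges the set by `ε n / 4` per round until
it exceeds `n / 2`.

Apply this to `Γ = R ∪ P`, where `P` is a longest path of `F`. Then more than `(1/2 + ε/4) n`
vertices `v` start a longest path, and for each of them the set `ends Γ v` of the last vertices of
such paths has at least `n / 2` elements. The sets `ends Γ v` depend only on `Γ`, which has at most
`2 δ n² p` edges, and there are so few sparse graphs `Γ` that a union bound over all of them is
possible: typically, for every sparse `Γ ⊆ G`, the graph `G` has about the expected number of edges
from any linear-sized set of such `v` into the sets `ends Γ v`. At least `ε n / 4` of the `v` lose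
fewer than about `(1/2 - ε) n p` edges, so one of these edges survives in `F` and closes a longest
path to a cycle. As `R` has an edge leaving every set of at most `n / 2` vertices, a cycle missing a
vertex would give a path longer than `P`; so the cycle is Hamiltonian.
-/

open Filter Real

namespace Resilience

variable {V : Type*}

/-- The degree of a vertex, as the cardinality of its neighbourhood. -/
noncomputable def deg (G : SimpleGraph V) (v : V) : ℕ := (G.neighborSet v).ncard

/-- The neighbourhood of a set of vertices: all vertices with a neighbour in `X`. -/
def nbhd (G : SimpleGraph V) (X : Set V) : Set V := {v | ∃ x ∈ X, G.Adj v x}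

/-- The minimum degree over a set of vertices. -/
noncomputable def minDeg (G : SimpleGraph V) (X : Set V) : ℕ :=
  sInf ((fun v => deg G v) '' X)

/-- The number of edges of `G` with one endpoint in `X` and the other in `Y`. -/
noncomputable def eBetween (G : SimpleGraph V) (X Y : Set V) : ℕ :=
  {e ∈ G.edgeSet | ∃ x ∈ X, ∃ y ∈ Y, e = s(x, y)}.ncard

/-- The number of edges of `G` with both endpoints in `A`. -/
noncomputable def eIn (G : SimpleGraph V) (A : Set V) : ℕ :=
  {e ∈ G.edgeSet | ∀ v ∈ e, v ∈ A}.ncard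

/-- The graph on `V` whose edges are the consecutive pairs of the list `l`;
this lets us view a path, recorded as a list of distinct vertices, as a graph. -/
def listGraph (l : List V) : SimpleGraph V :=
  SimpleGraph.fromEdgeSet {e | ∃ q ∈ l.zip l.tail, e = s(q.1, q.2)}

/-- `l` is a (nonempty) path on `V` all of whose edges lie in `G`. -/
def IsPathOn (G : SimpleGraph V) (l : List V) : Prop :=
  l ≠ [] ∧ l.Nodup ∧ l.Chain' G.Adj

/-- `l` is a longest path with all edges in `G`. -/
def IsLongestPathOn (G : SimpleGraph V) (l : List V) : Prop :=
  IsPathOn G l ∧ ∀ l' : List V, IsPathOn G l' → l'.length ≤ l.length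

/-- `l'` is obtained from the path `l` (with fixed last endpoint) by a single rotation
within `G`, whose broken edge lies on the original path `P`.  Writing
`l = a :: t₁ ++ c :: b :: t₂`, the pivot is `b`, the new edge is `ab ∈ G`, the broken
edge is `cb` (an edge of `P`), and the rotated path is `(a :: t₁ ++ [c]).reverse ++ b :: t₂`. -/
def IsRotation (G : SimpleGraph V) (P l l' : List V) : Prop :=
  ∃ (a c b : V) (t₁ t₂ : List V),
    l = a :: t₁ ++ c :: b :: t₂ ∧ G.Adj a b ∧ (listGraph P).Adj c b ∧
    l' = (a :: t₁ ++ [c]).reverse ++ b :: t₂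

/-- The set of paths obtainable from `P` by at most `t` successive rotations within `G`
with fixed last endpoint, all broken edges lying on `P`. -/
def rotSet (G : SimpleGraph V) (P : List V) : ℕ → Set (List V)
  | 0 => {P}
  | t + 1 => rotSet G P t ∪ {l' | ∃ l ∈ rotSet G P t, IsRotation G P l l'}

/-- `R^t_{G,P,u}`: the set of endpoints of paths obtainable from `P` by at most `t`
successive rotations within `G` with fixed last endpoint. -/
def Rset (G : SimpleGraph V) (P : List V) (t : ℕ) : Set V :=
  {x | ∃ l ∈ rotSet G P t, l.head? = some x}

/-- The family `H^ε_{n,p}` of Pósa-type subgraphs: there is an ordering of the vertices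
with non-increasing degrees such that `d_H(v_i) ≤ (n-i)p - εnp` for all `i < n/2`
(1-based indexing). -/
def PosaFamily (n : ℕ) (p ε : ℝ) (H : SimpleGraph (Fin n)) : Prop :=
  ∃ v : Fin n → Fin n, Function.Bijective v ∧
    (∀ i j : Fin n, i ≤ j → deg H (v j) ≤ deg H (v i)) ∧
    ∀ i : Fin n, ((i.1 : ℝ) + 1) < n / 2 →
      (deg H (v i) : ℝ) ≤ ((n : ℝ) - ((i.1 : ℝ) + 1)) * p - ε * n * p

/-- The family `H^{ε,δ}_{n,p}` of (shifted) Chvátal-type subgraphs, where the shift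
`δn` is recorded as a natural number `s`: there is an ordering of the vertices with
non-increasing degrees such that for all `i < n/2` (1-based indexing), either
`d_H(v_i) ≤ (n-i)p - εnp` or `d_H(v_{n-i-s}) ≤ ip - εnp`. -/
def ChvatalFamily (n : ℕ) (p ε : ℝ) (s : ℕ) (H : SimpleGraph (Fin n)) : Prop :=
  ∃ v : Fin n → Fin n, Function.Bijective v ∧
    (∀ i j : Fin n, i ≤ j → deg H (v j) ≤ deg H (v i)) ∧
    ∀ i : Fin n, ((i.1 : ℝ) + 1) < n / 2 →
      ((deg H (v i) : ℝ) ≤ ((n : ℝ) - ((i.1 : ℝ) + 1)) * p - ε * n * p ∨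
       (deg H (v ⟨n - (i.1 + 1) - s - 1, by have := i.2; omega⟩) : ℝ) ≤
         ((i.1 : ℝ) + 1) * p - ε * n * p)

/-- The probability weight of a fixed graph `G` in the binomial random graph `G_{n,p}`. -/
noncomputable def weight (n : ℕ) (p : ℝ) (G : SimpleGraph (Fin n)) : ℝ :=
  p ^ G.edgeSet.ncard * (1 - p) ^ (n.choose 2 - G.edgeSet.ncard)

open Classical in
/-- The probability that the binomial random graph `G_{n,p}` satisfies the property `Q`. -/
noncomputable def Pr (n : ℕ) (p : ℝ) (Q : SimpleGraph (Fin n) → Prop) : ℝ :=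
  ∑ G : SimpleGraph (Fin n), if Q G then weight n p G else 0

/-- Property `RE(δ)` for a (connected) graph `G` on `n` vertices: for every path `P`
on the vertex set, either `G ∪ P` has a longer path, or there are at least `δn` vertices
`v`, each with a set `T v` of at least `δn` vertices `w`, such that `G ∪ P` has a path
from `v` to `w` with the same vertex set as `P`. -/
def RE (n : ℕ) (δ : ℝ) (G : SimpleGraph (Fin n)) : Prop :=
  G.Connected ∧
  ∀ P : List (Fin n), P ≠ [] → P.Nodup →
    (∃ Q : List (Fin n), IsPathOn (G ⊔ listGraph P) Q ∧ P.length < Q.length) ∨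
    (∃ S : Set (Fin n), δ * n ≤ S.ncard ∧
      ∃ T : Fin n → Set (Fin n), (∀ v ∈ S, δ * n ≤ (T v).ncard) ∧
        ∀ v ∈ S, ∀ w ∈ T v, ∃ Q : List (Fin n),
          IsPathOn (G ⊔ listGraph P) Q ∧ Q.head? = some v ∧ Q.getLast? = some w ∧
          Q.toFinset = P.toFinset)

/-- `G₂` complements `G₁` (with respect to parameter `δ` as in `RE(δ)`): for every path
`P` on the vertex set, either `G₁ ∪ P` has a longer path, or there are sets `S`, `T v`
as in the definition of `RE(δ)` together with `v ∈ S` and `w ∈ T v` such that `vw` is an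
edge of `G₁ ∪ G₂`. -/
def Complements (n : ℕ) (δ : ℝ) (G₁ G₂ : SimpleGraph (Fin n)) : Prop :=
  ∀ P : List (Fin n), P ≠ [] → P.Nodup →
    (∃ Q : List (Fin n), IsPathOn (G₁ ⊔ listGraph P) Q ∧ P.length < Q.length) ∨
    (∃ S : Set (Fin n), δ * n ≤ S.ncard ∧
      ∃ T : Fin n → Set (Fin n), (∀ v ∈ S, δ * n ≤ (T v).ncard) ∧
        (∀ v ∈ S, ∀ w ∈ T v, ∃ Q : List (Fin n),
          IsPathOn (G₁ ⊔ listGraph P) Q ∧ Q.head? = some v ∧ Q.getLast? = some w ∧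
          Q.toFinset = P.toFinset) ∧
        ∃ v ∈ S, ∃ w ∈ T v, (G₁ ⊔ G₂).Adj v w)

open Finset
open scoped Classical

/-! ### Random subgraphs -/

section RandomSubgraph

variable {V : Type*} [Fintype V] {F Γ : SimpleGraph V} {q : ℝ}
  {φ ψ : SimpleGraph V → ℝ} {A B Q : SimpleGraph V → Prop}

/-- The expectation of `φ` over the random subgraph of `F` that keeps each edge of `F`
independently with probability `q`, written as a finite sum over the subgraphs of `F`. -/
noncomputable def expect (F : SimpleGraph V) (q : ℝ) (φ : SimpleGraph V → ℝ) : ℝ :=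
  ∑ G with G ≤ F,
    q ^ G.edgeSet.ncard * (1 - q) ^ (F.edgeSet.ncard - G.edgeSet.ncard) * φ G

/-- The probability that the random subgraph of `F`, keeping each edge independently with
probability `q`, satisfies `Q`. -/
noncomputable def prob (F : SimpleGraph V) (q : ℝ) (Q : SimpleGraph V → Prop) : ℝ :=
  expect F q fun G => if Q G then 1 else 0

lemma Pr_eq_prob (n : ℕ) (p : ℝ) (Q : SimpleGraph (Fin n) → Prop) : Pr n p Q = prob ⊤ p Q := by
  have hcard : (⊤ : SimpleGraph (Fin n)).edgeSet.ncard = n.choose 2 := by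
    rw [← SimpleGraph.coe_edgeFinset, Set.ncard_coe_finset,
      SimpleGraph.card_edgeFinset_top_eq_card_choose_two, Fintype.card_fin]
  simp only [Pr, prob, expect, weight, le_top, filter_true, hcard, mul_ite, mul_one, mul_zero]
  congr!

lemma ncard_edgeSet_eq_card (G : SimpleGraph V) : G.edgeSet.ncard = #G.edgeFinset := by
  rw [← SimpleGraph.coe_edgeFinset, Set.ncard_coe_finset]

lemma sum_subgraph_eq_sum_powerset (F : SimpleGraph V) (f : Finset (Sym2 V) → ℝ) :
    ∑ G with G ≤ F, f G.edgeFinset = ∑ A ∈ F.edgeFinset.powerset, f A := by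
  refine sum_bij (fun G _ => G.edgeFinset) (fun G hG => ?_) (fun G _ G' _ h => ?_)
    (fun A hA => ⟨SimpleGraph.fromEdgeSet A, ?_, ?_⟩) fun _ _ => rfl
  · simpa using hG
  · simpa using h
  all_goals
    have hAF : (A : Set (Sym2 V)) ⊆ F.edgeSet := by simpa using coe_subset.2 (mem_powerset.1 hA)
  · rw [mem_filter_univ, ← F.fromEdgeSet_edgeSet]
    exact SimpleGraph.fromEdgeSet_mono hAF
  · refine coe_injective ?_
    rw [SimpleGraph.coe_edgeFinset, SimpleGraph.edgeSet_fromEdgeSet, sdiff_eq_left]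
    exact Set.disjoint_left.2 fun e he => F.not_isDiag_of_mem_edgeSet (hAF he)

lemma expect_prod (F : SimpleGraph V) (q : ℝ) (x : Sym2 V → ℝ) :
    expect F q (fun G => ∏ e ∈ G.edgeFinset, x e) = ∏ e ∈ F.edgeFinset, (q * x e + (1 - q)) := by
  simp only [expect, ncard_edgeSet_eq_card]
  rw [sum_subgraph_eq_sum_powerset F fun A =>
    q ^ #A * (1 - q) ^ (#F.edgeFinset - #A) * ∏ e ∈ A, x e, prod_add]
  refine sum_congr rfl fun A hA => ?_
  rw [prod_mul_distrib, prod_const, prod_const, card_sdiff_of_subset (mem_powerset.1 hA)]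
  ring

lemma sum_pow_ncard_edgeSet (F : SimpleGraph V) (x : ℝ) :
    ∑ G with G ≤ F, x ^ G.edgeSet.ncard = (1 + x) ^ F.edgeSet.ncard := by
  simp only [ncard_edgeSet_eq_card]
  rw [sum_subgraph_eq_sum_powerset F fun A => x ^ #A, add_comm 1 x,
    ← sum_pow_mul_eq_add_pow x 1]
  simp only [one_pow, mul_one]

lemma expect_const (F : SimpleGraph V) (q c : ℝ) : expect F q (fun _ => c) = c := by
  have hone : expect F q (fun _ => 1) = 1 := by simpa using expect_prod F q fun _ => 1
  calc expect F q (fun _ => c) = expect F q (fun _ => 1) * c := by simp [expect, sum_mul]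
    _ = c := by rw [hone, one_mul]

lemma expect_mono (h0 : 0 ≤ q) (h1 : q ≤ 1) (h : ∀ G ≤ F, φ G ≤ ψ G) :
    expect F q φ ≤ expect F q ψ := by
  refine sum_le_sum fun G hG => mul_le_mul_of_nonneg_left (h G (by simpa using hG)) ?_
  have : 0 ≤ 1 - q := sub_nonneg.2 h1
  positivity

lemma expect_const_mul (F : SimpleGraph V) (q c : ℝ) (φ : SimpleGraph V → ℝ) :
    expect F q (fun G => c * φ G) = c * expect F q φ := by
  simp only [expect, mul_sum]
  exact sum_congr rfl fun G _ => by ring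

lemma expect_add (F : SimpleGraph V) (q : ℝ) (φ ψ : SimpleGraph V → ℝ) :
    expect F q (fun G => φ G + ψ G) = expect F q φ + expect F q ψ := by
  simp only [expect, mul_add, sum_add_distrib]

lemma expect_sum {ι : Type*} (s : Finset ι) (F : SimpleGraph V) (q : ℝ)
    (φ : ι → SimpleGraph V → ℝ) :
    expect F q (fun G => ∑ i ∈ s, φ i G) = ∑ i ∈ s, expect F q (φ i) := by
  simp only [expect, mul_sum]
  exact sum_comm

lemma prob_le_expect (h0 : 0 ≤ q) (h1 : q ≤ 1) (hφ : ∀ G ≤ F, 0 ≤ φ G)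
    (h : ∀ G ≤ F, Q G → 1 ≤ φ G) : prob F q Q ≤ expect F q φ := by
  refine expect_mono h0 h1 fun G hG => ?_
  split_ifs with hQ
  exacts [h G hG hQ, hφ G hG]

lemma prob_mono (h0 : 0 ≤ q) (h1 : q ≤ 1) (h : ∀ G ≤ F, A G → B G) :
    prob F q A ≤ prob F q B := by
  refine prob_le_expect h0 h1 (fun G _ => by split_ifs <;> norm_num) fun G hG hA => ?_
  rw [if_pos (h G hG hA)]

lemma prob_or_le (h0 : 0 ≤ q) (h1 : q ≤ 1) :
    prob F q (fun G => A G ∨ B G) ≤ prob F q A + prob F q B := by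
  simp only [prob, ← expect_add]
  refine expect_mono h0 h1 fun G _ => ?_
  split_ifs <;> simp_all

lemma prob_exists_le {ι : Type*} [Fintype ι] (h0 : 0 ≤ q) (h1 : q ≤ 1)
    (A : ι → SimpleGraph V → Prop) :
    prob F q (fun G => ∃ i, A i G) ≤ ∑ i, prob F q (A i) := by
  have hind : ∀ i G, (0 : ℝ) ≤ if A i G then 1 else 0 := fun i G => by split_ifs <;> norm_num
  simp only [prob, ← expect_sum]
  refine prob_le_expect h0 h1 (fun G _ => sum_nonneg fun i _ => hind i G) ?_
  rintro G - ⟨i, hi⟩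
  calc (1 : ℝ) = if A i G then 1 else 0 := (if_pos hi).symm
    _ ≤ _ := single_le_sum (f := fun i => if A i G then (1 : ℝ) else 0) (fun i _ => hind i G)
      (mem_univ i)

lemma prob_exists_exists_le {ι κ : Type*} [Fintype ι] [Fintype κ] (h0 : 0 ≤ q) (h1 : q ≤ 1)
    (A : ι → κ → SimpleGraph V → Prop) :
    prob F q (fun G => ∃ i j, A i j G) ≤ ∑ z : ι × κ, prob F q (A z.1 z.2) :=
  (prob_mono h0 h1 fun _ _ ⟨i, j, h⟩ => ⟨(i, j), h⟩).trans
    (prob_exists_le h0 h1 fun z : ι × κ => A z.1 z.2)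

lemma prob_eq_zero (h : ∀ G ≤ F, ¬ Q G) : prob F q Q = 0 :=
  sum_eq_zero fun G hG => mul_eq_zero_of_right _ (if_neg (h G (mem_filter.1 hG).2))

lemma one_sub_prob_le (h0 : 0 ≤ q) (h1 : q ≤ 1) (h : ∀ G ≤ F, ¬ B G → Q G) :
    1 - prob F q B ≤ prob F q Q := by
  have hBQ : 1 ≤ prob F q B + prob F q Q := by
    simp only [prob, ← expect_add]
    refine (expect_const F q 1).symm.trans_le (expect_mono h0 h1 fun G hG => ?_)
    by_cases hB : B G
    · split_ifs <;> norm_num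
    · rw [if_pos (h G hG hB), if_neg hB, zero_add]
  linarith

lemma exists_not_of_prob_lt_one (h0 : 0 ≤ q) (h1 : q ≤ 1) (h : prob F q B < 1) :
    ∃ G ≤ F, ¬ B G := by
  by_contra! hB
  have := prob_mono (A := fun _ => True) h0 h1 fun G hG _ => hB G hG
  simp only [prob, if_true, expect_const] at this
  exact absurd h (not_lt.2 this)

lemma prob_le_and_sdiff (hΓ : Γ ≤ F) (q : ℝ) (Q : SimpleGraph V → Prop) :
    prob F q (fun G => Γ ≤ G ∧ Q (G \ Γ)) = q ^ Γ.edgeSet.ncard * prob (F \ Γ) q Q := by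
  have hcard : ∀ {G}, Γ ≤ G → (G \ Γ).edgeSet.ncard + Γ.edgeSet.ncard = G.edgeSet.ncard :=
    fun {G} h => by
      rw [SimpleGraph.edgeSet_sdiff]
      exact Set.ncard_sdiff_add_ncard_of_subset (SimpleGraph.edgeSet_mono h)
  simp only [prob, expect, ite_and, mul_ite, mul_one, mul_zero, mul_sum]
  rw [← sum_filter, filter_filter]
  refine sum_bij' (fun G _ => G \ Γ) (fun G _ => G ⊔ Γ) ?_ ?_ ?_ ?_ ?_ <;>
    simp only [mem_filter_univ, and_imp]
  · exact fun G hG _ => sdiff_le_sdiff_right hG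
  · exact fun G hG => ⟨sup_le (hG.trans sdiff_le) hΓ, le_sup_right⟩
  · exact fun G _ hΓG => sdiff_sup_cancel hΓG
  · exact fun _ hG => by
      rw [sup_sdiff_right_self, (disjoint_sdiff_self_left.mono_left hG).sdiff_eq_left]
  · intro G _ hΓG
    rw [← hcard hΓG, ← hcard hΓ, Nat.add_sub_add_right, pow_add]
    split_ifs <;> ring

end RandomSubgraph

/-! ### Chernoff bounds for edge counts -/

section Chernoff

variable {V : Type*} {F G H Γ : SimpleGraph V} {q l : ℝ}

/-- The number of pairs in `D` that are adjacent in `G`. With `D = X ×ˢ Y` this counts the edges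
between `X` and `Y`, those inside `X ∩ Y` twice. -/
noncomputable def pairCount (G : SimpleGraph V) (D : Finset (V × V)) : ℕ :=
  #{z ∈ D | G.Adj z.1 z.2}

/-- The number of pairs in `D` that represent the edge `e`. -/
noncomputable def pairMult (D : Finset (V × V)) (e : Sym2 V) : ℕ := #{z ∈ D | s(z.1, z.2) = e}

lemma pairMult_le_two (D : Finset (V × V)) (e : Sym2 V) : pairMult D e ≤ 2 := by
  induction e using Sym2.ind with
  | _ a b =>
    have hsub : {z ∈ D | s(z.1, z.2) = s(a, b)} ⊆ {(a, b), (b, a)} := by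
      intro z hz
      simpa [Prod.ext_iff] using (mem_filter.1 hz).2
    exact (card_le_card hsub).trans card_le_two

lemma pairCount_eq_sum_pairMult [Fintype V] (G : SimpleGraph V) (D : Finset (V × V)) :
    pairCount G D = ∑ e ∈ G.edgeFinset, pairMult D e := by
  have hmaps : ∀ z ∈ ({z ∈ D | G.Adj z.1 z.2} : Finset (V × V)), s(z.1, z.2) ∈ G.edgeFinset :=
    fun z hz => by simpa using (mem_filter.1 hz).2
  rw [pairCount, card_eq_sum_card_fiberwise hmaps]
  refine sum_congr rfl fun e he => congrArg card ?_
  ext z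
  simp only [mem_filter, and_assoc, and_congr_right_iff, and_iff_right_iff_imp]
  rintro - rfl
  simpa using he

lemma pairCount_le_two_mul [Finite V] (G : SimpleGraph V) (D : Finset (V × V)) :
    pairCount G D ≤ 2 * G.edgeSet.ncard := by
  have := Fintype.ofFinite V
  rw [pairCount_eq_sum_pairMult, ncard_edgeSet_eq_card, mul_comm]
  exact sum_le_card_nsmul _ _ _ fun e _ => pairMult_le_two D e

lemma pairCount_mono (h : G ≤ H) (D : Finset (V × V)) : pairCount G D ≤ pairCount H D :=
  card_le_card (monotone_filter_right D fun _ _ hz => h hz)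

lemma pairCount_le_sdiff_add (F Γ : SimpleGraph V) (D : Finset (V × V)) :
    pairCount F D ≤ pairCount (F \ Γ) D + pairCount Γ D := by
  refine (card_le_card fun z hz => ?_).trans (card_union_le _ _)
  simp only [mem_union, mem_filter, SimpleGraph.sdiff_adj] at hz ⊢
  tauto

variable [Fintype V]

lemma exp_mul_pairCount (G : SimpleGraph V) (D : Finset (V × V)) (l : ℝ) :
    exp (l * pairCount G D) = ∏ e ∈ G.edgeFinset, exp (l * pairMult D e) := by
  rw [pairCount_eq_sum_pairMult, ← exp_sum, ← mul_sum, Nat.cast_sum]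

lemma exp_mul_sub_one_le {l : ℝ} (hl : |l| ≤ 1 / 2) {m : ℕ} (hm : m ≤ 2) :
    exp (l * m) - 1 ≤ (l + 2 * l ^ 2) * m := by
  have hm2 : (m : ℝ) ≤ 2 := by exact_mod_cast hm
  have hm0 : (0 : ℝ) ≤ m := m.cast_nonneg
  have hlm : |l * m| ≤ 1 := by
    rw [abs_mul, Nat.abs_cast]
    nlinarith [abs_nonneg l]
  have hexp := (abs_le.1 (abs_exp_sub_one_sub_id_le hlm)).2
  nlinarith [mul_nonneg (mul_nonneg (sq_nonneg l) hm0) (sub_nonneg.2 hm2)]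

lemma expect_exp_mul_pairCount_le (F : SimpleGraph V) (h0 : 0 ≤ q) (h1 : q ≤ 1)
    (hl : |l| ≤ 1 / 2) (D : Finset (V × V)) :
    expect F q (fun G => exp (l * pairCount G D)) ≤
      exp (q * (l + 2 * l ^ 2) * pairCount F D) := by
  simp only [exp_mul_pairCount, expect_prod]
  refine prod_le_prod (fun e _ => ?_) fun e _ => ?_
  · have : 0 ≤ 1 - q := sub_nonneg.2 h1
    positivity
  · calc q * exp (l * pairMult D e) + (1 - q)
        = q * (exp (l * pairMult D e) - 1) + 1 := by ring
      _ ≤ q * ((l + 2 * l ^ 2) * pairMult D e) + 1 := by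
        gcongr
        exact exp_mul_sub_one_le hl (pairMult_le_two D e)
      _ ≤ exp (q * (l + 2 * l ^ 2) * pairMult D e) := by
        rw [mul_assoc q]
        exact add_one_le_exp _

/-- Covers both tails, as `l` may be negative. -/
lemma prob_le_mul_pairCount_le (F : SimpleGraph V) (h0 : 0 ≤ q) (h1 : q ≤ 1) (hl : |l| ≤ 1 / 2)
    (t : ℝ) (D : Finset (V × V)) :
    prob F q (fun G => q * (l + 2 * l ^ 2) * pairCount F D + t ≤ l * pairCount G D) ≤
      exp (-t) := by
  set M := q * (l + 2 * l ^ 2) * pairCount F D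
  calc _ ≤ expect F q (fun G => exp (-(M + t)) * exp (l * pairCount G D)) :=
        prob_le_expect h0 h1 (fun G _ => by positivity) fun G _ hG => by
          rw [← exp_add]
          exact one_le_exp (by linarith)
    _ ≤ exp (-(M + t)) * exp M := by
        rw [expect_const_mul]
        gcongr
        exact expect_exp_mul_pairCount_le F h0 h1 hl D
    _ = exp (-t) := by rw [← exp_add]; ring_nf

lemma prob_lt_pairCount_le (F : SimpleGraph V) (h0 : 0 ≤ q) (h1 : q ≤ 1) (hl0 : 0 < l)
    (hl1 : l ≤ 1 / 2) (t : ℝ) (D : Finset (V × V)) :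
    prob F q (fun G => q * (1 + 2 * l) * pairCount F D + t / l < pairCount G D) ≤ exp (-t) := by
  refine (prob_mono h0 h1 fun G _ hG => ?_).trans
    (prob_le_mul_pairCount_le F h0 h1 (by rwa [abs_of_pos hl0]) t D)
  have := mul_lt_mul_of_pos_left hG hl0
  rw [mul_add, mul_div_cancel₀ _ hl0.ne'] at this
  linarith

lemma prob_pairCount_lt_le (F : SimpleGraph V) (h0 : 0 ≤ q) (h1 : q ≤ 1) (hl0 : 0 < l)
    (hl1 : l ≤ 1 / 2) (t : ℝ) (D : Finset (V × V)) :
    prob F q (fun G => (pairCount G D : ℝ) < q * (1 - 2 * l) * pairCount F D - t / l) ≤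
      exp (-t) := by
  refine (prob_mono h0 h1 fun G _ hG => ?_).trans
    (prob_le_mul_pairCount_le F h0 h1 (by rwa [abs_neg, abs_of_pos hl0]) t D)
  have := mul_lt_mul_of_pos_left hG hl0
  rw [mul_sub, mul_div_cancel₀ _ hl0.ne'] at this
  linarith

/-- The edges of `G \ Γ` are independent of the event `Γ ≤ G`, which gains the factor
`q ^ e(Γ)`. -/
lemma prob_le_and_pairCount_lt_le (hΓ : Γ ≤ F) (h0 : 0 ≤ q) (h1 : q ≤ 1) (hl0 : 0 ≤ l)
    (hl1 : l ≤ 1 / 2) (D : Finset (V × V)) :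
    prob F q (fun G => Γ ≤ G ∧ (pairCount G D : ℝ) < (1 - 4 * l) * q * pairCount F D) ≤
      q ^ Γ.edgeSet.ncard *
        exp (2 * l * Γ.edgeSet.ncard - 2 * l ^ 2 * q * pairCount F D) := by
  set M : ℝ := (pairCount F D : ℝ)
  set e : ℝ := (Γ.edgeSet.ncard : ℝ)
  have hM : M - 2 * e ≤ pairCount (F \ Γ) D := by
    have h := (pairCount_le_sdiff_add F Γ D).trans
      (Nat.add_le_add_left (pairCount_le_two_mul Γ D) _)
    rw [← @Nat.cast_le ℝ] at h
    push_cast at h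
    linarith
  have hl : 0 ≤ l - 2 * l ^ 2 := by nlinarith
  calc _ ≤ prob F q (fun G => Γ ≤ G ∧ (pairCount (G \ Γ) D : ℝ) < (1 - 4 * l) * q * M) :=
        prob_mono h0 h1 fun G _ hG => ⟨hG.1, lt_of_le_of_lt
          (by exact_mod_cast pairCount_mono sdiff_le D) hG.2⟩
    _ = q ^ Γ.edgeSet.ncard *
          prob (F \ Γ) q (fun G => (pairCount G D : ℝ) < (1 - 4 * l) * q * M) :=
        prob_le_and_sdiff hΓ q fun G => (pairCount G D : ℝ) < (1 - 4 * l) * q * M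
    _ ≤ _ := by
        gcongr
        refine (prob_mono h0 h1 fun G _ hG => ?_).trans
          ((prob_le_mul_pairCount_le (F \ Γ) h0 h1 (l := -l) (by rwa [abs_neg, abs_of_nonneg hl0])
            (2 * l ^ 2 * q * M - 2 * l * e) D).trans_eq (by rw [neg_sub]))
        have hG' := mul_le_mul_of_nonneg_left hG.le hl0
        have hM' := mul_le_mul_of_nonneg_left hM (mul_nonneg h0 hl)
        have he : q * (l - 2 * l ^ 2) * e ≤ l * e := by
          have : q * (l - 2 * l ^ 2) ≤ l := by nlinarith [mul_nonneg h0 (sq_nonneg l)]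
          gcongr
        nlinarith

end Chernoff

/-! ### Typical properties of random subgraphs -/

section Typical

variable {V : Type*} {q l : ℝ}

lemma pairCount_product (G : SimpleGraph V) (X Y : Finset V) :
    pairCount G (X ×ˢ Y) = ∑ x ∈ X, #{y ∈ Y | G.Adj x y} := by
  simp only [pairCount, card_filter, sum_product]

lemma pairCount_product_le (G : SimpleGraph V) (X Y : Finset V) :
    (pairCount G (X ×ˢ Y) : ℝ) ≤ #X * #Y := by
  exact_mod_cast (card_filter_le _ _).trans_eq (card_product X Y)

variable [Fintype V]

/-- The pairs `(v, w)` with `v ∈ S` and `w ∈ T v`. -/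
noncomputable def pairSet (S : Finset V) (T : V → Finset V) : Finset (V × V) :=
  {z ∈ S ×ˢ univ | z.2 ∈ T z.1}

lemma pairCount_pairSet (G : SimpleGraph V) (S : Finset V) (T : V → Finset V) :
    pairCount G (pairSet S T) = ∑ v ∈ S, #{w ∈ T v | G.Adj v w} := by
  simp only [pairCount, pairSet, card_filter, sum_filter, sum_product]
  refine sum_congr rfl fun v _ => ?_
  rw [← sum_filter, filter_univ_mem]

lemma deg_eq_card_filter (G : SimpleGraph V) (x : V) : deg G x = #{y | G.Adj x y} := by
  rw [deg, ← Set.ncard_coe_finset, coe_filter_univ]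
  rfl

lemma deg_eq_pairCount (G : SimpleGraph V) (x : V) :
    deg G x = pairCount G ({x} ×ˢ univ) := by
  rw [pairCount_product, sum_singleton, deg_eq_card_filter]

lemma two_mul_ncard_edgeSet (G : SimpleGraph V) :
    2 * G.edgeSet.ncard = pairCount G (univ ×ˢ univ) := by
  rw [pairCount_product, ncard_edgeSet_eq_card, ← SimpleGraph.sum_degrees_eq_twice_card_edges]
  simp only [← SimpleGraph.card_neighborFinset_eq_degree, SimpleGraph.neighborFinset_eq_filter]

lemma two_mul_ncard_edgeSet_le (G : SimpleGraph V) :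
    2 * (G.edgeSet.ncard : ℝ) ≤ Fintype.card V ^ 2 := by
  have := pairCount_product_le G univ univ
  rw [← two_mul_ncard_edgeSet, card_univ] at this
  push_cast at this
  linarith

lemma le_pairCount_top_pairSet {S : Finset V} {T : V → Finset V} {a : ℝ}
    (hT : ∀ v ∈ S, a ≤ #(T v)) : #S * (a - 1) ≤ pairCount ⊤ (pairSet S T) := by
  rw [pairCount_pairSet, ← nsmul_eq_mul, Nat.cast_sum]
  refine card_nsmul_le_sum _ _ _ fun v hv => ?_
  have herase : (#(T v) : ℝ) - 1 ≤ #((T v).erase v) :=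
    sub_le_iff_le_add.2 (by exact_mod_cast Nat.le_add_of_sub_le pred_card_le_card_erase)
  refine ((sub_le_sub_right (hT v hv) 1).trans herase).trans (Nat.cast_le.2 (card_le_card ?_))
  intro w hw
  simp only [mem_filter, mem_erase, SimpleGraph.top_adj] at hw ⊢
  exact ⟨hw.2, hw.1.symm⟩

lemma prob_exists_lt_pairCount_le (F : SimpleGraph V) (h0 : 0 ≤ q) (h1 : q ≤ 1) (hl0 : 0 < l)
    (hl1 : l ≤ 1 / 2) (t : ℝ) :
    prob F q (fun G => ∃ X Y : Finset V,
      q * (1 + 2 * l) * pairCount F (X ×ˢ Y) + t / l < pairCount G (X ×ˢ Y)) ≤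
      4 ^ Fintype.card V * exp (-t) := by
  refine (prob_exists_exists_le h0 h1 _).trans ((sum_le_card_nsmul _ _ _ fun Z _ =>
    prob_lt_pairCount_le F h0 h1 hl0 hl1 t (Z.1 ×ˢ Z.2)).trans_eq ?_)
  rw [card_univ, Fintype.card_prod, Fintype.card_finset, nsmul_eq_mul]
  push_cast
  rw [← mul_pow]
  norm_num

/-- The error grows with the sizes of the two sets, so that `s` may be chosen as small as
`log (card V)`. -/
lemma prob_exists_lt_pairCount_le' (F : SimpleGraph V) (h0 : 0 ≤ q) (h1 : q ≤ 1) (s : ℝ) :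
    prob F q (fun G => ∃ X Y : Finset V,
      2 * q * pairCount F (X ×ˢ Y) + 2 * (#X + #Y + 1) * s < pairCount G (X ×ˢ Y)) ≤
      exp (-s) * (1 + exp (-s)) ^ (2 * Fintype.card V) := by
  have hterm : ∀ Z : Finset V × Finset V,
      prob F q (fun G => 2 * q * pairCount F (Z.1 ×ˢ Z.2) + 2 * (#Z.1 + #Z.2 + 1) * s <
        pairCount G (Z.1 ×ˢ Z.2)) ≤ exp (-s) * (exp (-s) ^ #Z.1 * exp (-s) ^ #Z.2) := by
    intro Z
    have h := prob_lt_pairCount_le F h0 h1 one_half_pos le_rfl ((#Z.1 + #Z.2 + 1) * s) (Z.1 ×ˢ Z.2)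
    convert h using 2
    · ring_nf
    · rw [← exp_nat_mul, ← exp_nat_mul, ← exp_add, ← exp_add]
      ring_nf
  have hsum : ∑ X : Finset V, exp (-s) ^ #X = (1 + exp (-s)) ^ Fintype.card V := by
    simpa [add_comm] using Fintype.sum_pow_mul_eq_add_pow V (exp (-s)) 1
  refine (prob_exists_exists_le h0 h1 _).trans ((sum_le_sum fun Z _ => hterm Z).trans_eq ?_)
  rw [← mul_sum, Fintype.sum_prod_type]
  dsimp only
  rw [← Fintype.sum_mul_sum, hsum, two_mul, pow_add]

lemma prob_exists_deg_lt_le (F : SimpleGraph V) (h0 : 0 ≤ q) (h1 : q ≤ 1) (hl0 : 0 < l)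
    (hl1 : l ≤ 1 / 2) (t : ℝ) :
    prob F q (fun G => ∃ x, (deg G x : ℝ) < q * (1 - 2 * l) * deg F x - t / l) ≤
      Fintype.card V * exp (-t) := by
  simp only [deg_eq_pairCount]
  refine (prob_exists_le h0 h1 _).trans ((sum_le_card_nsmul _ _ _ fun x _ =>
    prob_pairCount_lt_le F h0 h1 hl0 hl1 t ({x} ×ˢ univ)).trans_eq ?_)
  rw [card_univ, nsmul_eq_mul]

/-- The sets `D Γ i` depend on a sparse subgraph `Γ` of the random graph `G`. The union bound over
all `Γ` is affordable because `Γ ⊆ G` costs a factor `q ^ e(Γ)`; the free parameter `θ` balances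
it against the number of sparse graphs `Γ`. -/
lemma prob_exists_sparse_pairCount_lt_le {ι : Type*} [Fintype ι] (F : SimpleGraph V)
    (h0 : 0 ≤ q) (h1 : q ≤ 1) (hl0 : 0 ≤ l) (hl1 : l ≤ 1 / 2) {θ : ℝ} (hθ : 0 ≤ θ) (K M : ℝ)
    (D : SimpleGraph V → ι → Finset (V × V)) :
    prob F q (fun G => ∃ Γ i, Γ ≤ G ∧ (Γ.edgeSet.ncard : ℝ) ≤ K ∧ M ≤ pairCount F (D Γ i) ∧
        (pairCount G (D Γ i) : ℝ) < (1 - 4 * l) * q * pairCount F (D Γ i)) ≤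
      Fintype.card ι * exp ((θ + 2 * l) * K - 2 * l ^ 2 * q * M +
        q * exp (-θ) * F.edgeSet.ncard) := by
  set c := (θ + 2 * l) * K - 2 * l ^ 2 * q * M
  set x := q * exp (-θ)
  have hx : 0 ≤ x := by positivity
  have hterm : ∀ Z : SimpleGraph V × ι, prob F q (fun G => Z.1 ≤ G ∧ (Z.1.edgeSet.ncard : ℝ) ≤ K ∧
      M ≤ pairCount F (D Z.1 Z.2) ∧
        (pairCount G (D Z.1 Z.2) : ℝ) < (1 - 4 * l) * q * pairCount F (D Z.1 Z.2)) ≤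
      if Z.1 ≤ F then exp c * x ^ Z.1.edgeSet.ncard else 0 := by
    rintro ⟨Γ, i⟩
    split_ifs with hΓ
    · by_cases h : (Γ.edgeSet.ncard : ℝ) ≤ K ∧ M ≤ pairCount F (D Γ i)
      · refine (prob_mono h0 h1 fun G _ hG => ⟨hG.1, hG.2.2.2⟩).trans
          ((prob_le_and_pairCount_lt_le hΓ h0 h1 hl0 hl1 (D Γ i)).trans ?_)
        rw [mul_pow, mul_left_comm, ← exp_nat_mul, ← exp_add]
        gcongr
        have hK := mul_le_mul_of_nonneg_left h.1 (by positivity : 0 ≤ θ + 2 * l)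
        have hM := mul_le_mul_of_nonneg_left h.2 (by positivity : 0 ≤ 2 * l ^ 2 * q)
        linarith
      · exact (prob_eq_zero fun G _ hG => h ⟨hG.2.1, hG.2.2.1⟩).trans_le
          (mul_nonneg (exp_pos c).le (pow_nonneg hx _))
    · exact (prob_eq_zero fun G hG hΓG => hΓ (hΓG.1.trans hG)).le
  calc _ ≤ ∑ Z : SimpleGraph V × ι, if Z.1 ≤ F then exp c * x ^ Z.1.edgeSet.ncard else 0 :=
        (prob_exists_exists_le h0 h1 _).trans (sum_le_sum fun Z _ => hterm Z)
    _ = Fintype.card ι * (exp c * (1 + x) ^ F.edgeSet.ncard) := by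
        rw [Fintype.sum_prod_type_right, ← sum_pow_ncard_edgeSet, mul_sum]
        simp only [← sum_filter, sum_const, card_univ, nsmul_eq_mul]
    _ ≤ _ := by
        rw [exp_add, mul_comm x, exp_nat_mul]
        gcongr
        rw [add_comm]
        exact add_one_le_exp x

end Typical

/-! ### Rotations of a longest path -/

section Rotations

variable {V : Type*} {Γ : SimpleGraph V} {m s t : ℕ} {p g : ℕ → V}

/-- The sequence `g 0, …, g (m - 1)` is a path of `Γ` on `m` vertices; the values of `g` from `m`
on are irrelevant. -/
structure IsPathSeq (Γ : SimpleGraph V) (m : ℕ) (g : ℕ → V) : Prop where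
  inj : ∀ i j, i < m → j < m → g i = g j → i = j
  adj : ∀ i, i + 1 < m → Γ.Adj (g i) (g (i + 1))

/-- No path of `Γ` has more than `m` vertices. -/
def NoLongerPath (Γ : SimpleGraph V) (m : ℕ) : Prop := ∀ m' g, IsPathSeq Γ m' g → m' ≤ m

/-- The `i`-th edge of the path `g`. -/
def edgeAt (g : ℕ → V) (i : ℕ) : Sym2 V := s(g i, g (i + 1))

/-- Pósa's rotation: reversal of the initial segment `g 0, …, g j` of a path. -/
def reverseUpTo (j : ℕ) (g : ℕ → V) : ℕ → V := fun i => if i ≤ j then g (j - i) else g i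

/-- `g` is a path of `Γ` with the same vertices and the same last vertex as `p`, containing all
but at most `t` of the edges of `p`. Every path obtained from `p` by at most `t` rotations is of
this kind. -/
structure IsRearrangement (Γ : SimpleGraph V) (m : ℕ) (p : ℕ → V) (t : ℕ) (g : ℕ → V) :
    Prop extends IsPathSeq Γ m g where
  last_eq : g (m - 1) = p (m - 1)
  exists_eq : ∀ i < m, ∃ j < m, g i = p j
  exists_eq' : ∀ i < m, ∃ j < m, g j = p i
  exists_lost : ∃ B : Finset ℕ, #B ≤ t ∧
    ∀ i, i + 1 < m → i ∉ B → ∃ k, k + 1 < m ∧ edgeAt g k = edgeAt p i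

lemma IsPathSeq.edgeAt_inj (hp : IsPathSeq Γ m p) {i j : ℕ} (hi : i + 1 < m) (hj : j + 1 < m)
    (h : edgeAt p i = edgeAt p j) : i = j := by
  rcases Sym2.eq_iff.1 h with ⟨h, -⟩ | ⟨h, h'⟩
  · exact hp.inj i j (by omega) (by omega) h
  · have := hp.inj _ _ (by omega) (by omega) h
    have := hp.inj _ _ (by omega) (by omega) h'
    omega

lemma edgeAt_reverseUpTo_of_lt {i j : ℕ} (h : i < j) :
    edgeAt (reverseUpTo j g) (j - (i + 1)) = edgeAt g i := by
  unfold edgeAt reverseUpTo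
  rw [if_pos (by omega), if_pos (by omega), Sym2.eq_swap]
  congr <;> omega

lemma edgeAt_reverseUpTo_of_gt {i j : ℕ} (h : j < i) : edgeAt (reverseUpTo j g) i = edgeAt g i := by
  unfold edgeAt reverseUpTo
  rw [if_neg (by omega), if_neg (by omega)]

lemma IsPathSeq.rotate (hg : IsPathSeq Γ m g) {j : ℕ} (hj : j + 1 < m)
    (hadj : Γ.Adj (g 0) (g (j + 1))) : IsPathSeq Γ m (reverseUpTo j g) where
  inj a b ha hb hab := by
    unfold reverseUpTo at hab
    split_ifs at hab <;> have := hg.inj _ _ (by omega) (by omega) hab <;> omega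
  adj i hi := by
    rw [← SimpleGraph.mem_edgeSet]
    change edgeAt _ i ∈ _
    rcases lt_trichotomy i j with h | rfl | h
    · rw [show i = j - (j - (i + 1) + 1) by omega, edgeAt_reverseUpTo_of_lt (by omega)]
      exact hg.adj _ (by omega)
    · simpa [edgeAt, reverseUpTo] using hadj
    · rw [edgeAt_reverseUpTo_of_gt h]
      exact hg.adj i hi

lemma IsRearrangement.rotate (hg : IsRearrangement Γ m p t g) (hp : IsPathSeq Γ m p) {j : ℕ}
    (hj : j + 1 < m) (hadj : Γ.Adj (g 0) (g (j + 1))) :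
    IsRearrangement Γ m p (t + 1) (reverseUpTo j g) where
  toIsPathSeq := hg.toIsPathSeq.rotate hj hadj
  last_eq := by
    rw [reverseUpTo, if_neg (by omega)]
    exact hg.last_eq
  exists_eq i hi := by
    unfold reverseUpTo
    split_ifs
    · exact hg.exists_eq _ (by omega)
    · exact hg.exists_eq _ hi
  exists_eq' i hi := by
    obtain ⟨k, hk, hki⟩ := hg.exists_eq' i hi
    unfold reverseUpTo
    by_cases hkj : k ≤ j
    · refine ⟨j - k, by omega, ?_⟩
      rw [if_pos (by omega), ← hki]
      congr 1
      omega
    · exact ⟨k, hk, by rw [if_neg hkj, hki]⟩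
  exists_lost := by
    obtain ⟨B, hB, hkept⟩ := hg.exists_lost
    -- the only further edge lost is the one between positions `j` and `j + 1`
    let L := {i ∈ range m | i + 1 < m ∧ edgeAt p i = edgeAt g j}
    have hL : #L ≤ 1 := by
      refine card_le_one.2 fun a ha b hb => ?_
      simp only [L, mem_filter] at ha hb
      exact hp.edgeAt_inj ha.2.1 hb.2.1 (ha.2.2.trans hb.2.2.symm)
    refine ⟨B ∪ L, (card_union_le _ _).trans (by omega), fun i hi hiB => ?_⟩
    rw [mem_union, not_or] at hiB
    obtain ⟨k, hk, hki⟩ := hkept i hi hiB.1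
    rcases lt_trichotomy k j with hkj | rfl | hkj
    · exact ⟨j - (k + 1), by omega, by rw [edgeAt_reverseUpTo_of_lt hkj, hki]⟩
    · exact absurd (by simp only [L, mem_filter, mem_range]; exact ⟨by omega, hi, hki.symm⟩) hiB.2
    · exact ⟨k, hk, by rw [edgeAt_reverseUpTo_of_gt hkj, hki]⟩

lemma IsRearrangement.mono (hst : s ≤ t) (hg : IsRearrangement Γ m p s g) :
    IsRearrangement Γ m p t g :=
  let ⟨B, hB, hkept⟩ := hg.exists_lost
  { hg with exists_lost := ⟨B, hB.trans hst, hkept⟩ }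

lemma IsPathSeq.isRearrangement_self (hp : IsPathSeq Γ m p) (t : ℕ) :
    IsRearrangement Γ m p t p where
  toIsPathSeq := hp
  last_eq := rfl
  exists_eq i hi := ⟨i, hi, rfl⟩
  exists_eq' i hi := ⟨i, hi, rfl⟩
  exists_lost := ⟨∅, by simp, fun i hi _ => ⟨i, hi, rfl⟩⟩

lemma IsPathSeq.cons (hg : IsPathSeq Γ m g) {y : V} (hy : Γ.Adj (g 0) y)
    (hout : ∀ i < m, g i ≠ y) :
    IsPathSeq Γ (m + 1) (fun i => if i = 0 then y else g (i - 1)) where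
  inj a b ha hb hab := by
    split_ifs at hab
    · omega
    · exact absurd hab.symm (hout _ (by omega))
    · exact absurd hab (hout _ (by omega))
    · have := hg.inj _ _ (by omega) (by omega) hab
      omega
  adj i hi := by
    rcases i with - | i
    · exact hy.symm
    · simpa using hg.adj i (by omega)

lemma IsPathSeq.exists_eq_of_adj_head (hg : IsPathSeq Γ m g) (hmax : NoLongerPath Γ m) {y : V}
    (hy : Γ.Adj (g 0) y) : ∃ j, j + 1 < m ∧ g (j + 1) = y := by
  by_contra! hcon
  refine absurd (hmax _ _ (hg.cons hy fun i hi h => ?_)) (by omega)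
  rcases i with - | i
  · exact hy.ne h
  · exact hcon i hi h

lemma IsRearrangement.exists_position (hg : IsRearrangement Γ m p t g) (hp : IsPathSeq Γ m p) :
    ∃ pos : ℕ → ℕ, (∀ i < m, g (pos i) = p i) ∧
      (∀ a i, a < m → i < m → g a = p i → pos i = a) ∧
      (∀ i j, i < m → j < m → pos i = pos j → i = j) ∧
      ∀ i, i + 1 < m → (∃ k, k + 1 < m ∧ edgeAt g k = edgeAt p i) →
        pos (i + 1) = pos i + 1 ∨ pos i = pos (i + 1) + 1 := by
  choose! pos hpos hgpos using hg.exists_eq'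
  have huniq : ∀ a i, a < m → i < m → g a = p i → pos i = a := fun a i ha hi h =>
    hg.inj _ _ (hpos i hi) ha (by rw [h, hgpos i hi])
  refine ⟨pos, hgpos, huniq, fun i j hi hj h => ?_, ?_⟩
  · exact hp.inj _ _ hi hj (by rw [← hgpos i hi, ← hgpos j hj, h])
  · rintro i hi ⟨k, hk, h⟩
    rcases Sym2.eq_iff.1 h with ⟨h₁, h₂⟩ | ⟨h₁, h₂⟩
    · exact .inl (by rw [huniq _ _ (by omega) (by omega) h₁, huniq _ _ hk (by omega) h₂])
    · exact .inr (by rw [huniq _ _ (by omega) (by omega) h₁, huniq _ _ hk (by omega) h₂])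

lemma succ_or_pred_of_no_backtrack {f : ℕ → ℕ} {a b : ℕ}
    (hstep : ∀ i, a ≤ i → i + 1 < b → f (i + 1) = f i + 1 ∨ f i = f (i + 1) + 1)
    (hne : ∀ i, a ≤ i → i + 2 < b → f i ≠ f (i + 2)) :
    (∀ i, a ≤ i → i + 1 < b → f (i + 1) = f i + 1) ∨
      (∀ i, a ≤ i → i + 1 < b → f i = f (i + 1) + 1) := by
  rcases le_or_gt b (a + 1) with hab | hab
  · exact .inl fun i _ _ => by omega
  rcases hstep a le_rfl hab with h | h
  · refine .inl fun i hi => Nat.le_induction (fun _ => h) (fun i hi ih hib => ?_) i hi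
    have := ih (by omega)
    have := hstep (i + 1) (by omega) hib
    have : f i ≠ f (i + 1 + 1) := hne i hi hib
    omega
  · refine .inr fun i hi => Nat.le_induction (fun _ => h) (fun i hi ih hib => ?_) i hi
    have := ih (by omega)
    have := hstep (i + 1) (by omega) hib
    have : f i ≠ f (i + 1 + 1) := hne i hi hib
    omega

/-- The positions on `p` of the members of `Y`. -/
noncomputable def positions (m : ℕ) (p : ℕ → V) (Y : Finset V) : Finset ℕ :=
  {i ∈ range m | p i ∈ Y}

lemma IsPathSeq.card_positions_le (hp : IsPathSeq Γ m p) (Y : Finset V) :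
    #(positions m p Y) ≤ #Y := by
  refine card_le_card_of_injOn p (fun i hi => (mem_filter.1 hi).2) fun i hi j hj h => ?_
  simp only [positions, coe_filter, mem_range, Set.mem_ofPred_eq] at hi hj
  exact hp.inj _ _ hi.1 hj.1 h

/-- The neighbours along `p` of the members of `Y`. -/
noncomputable def nextTo (m : ℕ) (p : ℕ → V) (Y : Finset V) : Finset V :=
  (positions m p Y).image (fun i => p (i + 1)) ∪ (positions m p Y).image (fun i => p (i - 1))

lemma IsPathSeq.card_nextTo_le (hp : IsPathSeq Γ m p) (Y : Finset V) :
    #(nextTo m p Y) ≤ 2 * #Y :=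
  calc #(nextTo m p Y) ≤ #(positions m p Y) + #(positions m p Y) :=
        (card_union_le _ _).trans (add_le_add card_image_le card_image_le)
    _ ≤ 2 * #Y := by have := hp.card_positions_le Y; omega

/-- The positions of the `k`-th block of length `ℓ` on a path with `m` vertices. -/
def block (m ℓ k : ℕ) : Finset ℕ := {i ∈ range m | i / ℓ = k}

lemma mem_block {ℓ k i : ℕ} (hℓ : 0 < ℓ) :
    i ∈ block m ℓ k ↔ i < m ∧ k * ℓ ≤ i ∧ i < (k + 1) * ℓ := by
  simp only [block, mem_filter, mem_range, Nat.div_eq_iff hℓ, add_mul, one_mul]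
  omega

/-- Vertices of block `k` that are first in the block or whose predecessor on `p` is in `Y`. -/
noncomputable def afterSet (m : ℕ) (p : ℕ → V) (ℓ : ℕ) (Y : Finset V) (k : ℕ) : Finset V :=
  {i ∈ block m ℓ k | i = k * ℓ ∨ p (i - 1) ∈ Y}.image p

/-- Vertices of block `k` that are last in the block or whose successor on `p` is in `Y`. -/
noncomputable def beforeSet (m : ℕ) (p : ℕ → V) (ℓ : ℕ) (Y : Finset V) (k : ℕ) : Finset V :=
  {i ∈ block m ℓ k | i + 1 ∉ block m ℓ k ∨ p (i + 1) ∈ Y}.image p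

lemma IsPathSeq.card_image_range (hg : IsPathSeq Γ m g) : #((range m).image g) = m := by
  rw [card_image_of_injOn, card_range]
  exact fun i hi j hj => hg.inj i j (mem_range.1 (mem_coe.1 hi)) (mem_range.1 (mem_coe.1 hj))

variable [Fintype V]

lemma IsPathSeq.le_card (hg : IsPathSeq Γ m g) : m ≤ Fintype.card V :=
  hg.card_image_range.symm.le.trans (card_le_univ _)

/-- The heads of the rearrangements of `p` that lose at most `t` edges. -/
noncomputable def heads (Γ : SimpleGraph V) (m : ℕ) (p : ℕ → V) (t : ℕ) : Finset V :=
  {x | ∃ g, IsRearrangement Γ m p t g ∧ g 0 = x}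

lemma mem_heads {x : V} : x ∈ heads Γ m p t ↔ ∃ g, IsRearrangement Γ m p t g ∧ g 0 = x := by
  simp only [heads, mem_filter, mem_univ, true_and]

lemma heads_mono (hst : s ≤ t) : heads Γ m p s ⊆ heads Γ m p t := fun _ hx =>
  let ⟨g, hg, h⟩ := mem_heads.1 hx
  mem_heads.2 ⟨g, hg.mono hst, h⟩

lemma IsRearrangement.mem_heads_of_adj (hg : IsRearrangement Γ m p t g) (hp : IsPathSeq Γ m p)
    {j : ℕ} (hj : j + 1 < m) (hadj : Γ.Adj (g 0) (g (j + 1))) : g j ∈ heads Γ m p (t + 1) :=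
  mem_heads.2 ⟨_, hg.rotate hp hj hadj, by simp [reverseUpTo]⟩

lemma exists_neighbors_subset_nextTo (hp : IsPathSeq Γ m p) (hmax : NoLongerPath Γ m) {x : V}
    (hx : x ∈ heads Γ m p t) :
    ∃ E : Finset V, #E ≤ 2 * t + 2 ∧
      ∀ y, Γ.Adj x y → y ∈ E ∪ nextTo m p (heads Γ m p (t + 1)) := by
  obtain ⟨g, hg, rfl⟩ := mem_heads.1 hx
  obtain ⟨B, hB, hkept⟩ := hg.exists_lost
  obtain ⟨pos, hgpos, huniq, hinj, hstep⟩ := hg.exists_position hp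
  refine ⟨B.image p ∪ B.image (fun i => p (i + 1)) ∪ {p 0, p (m - 1)}, ?_, fun y hy => ?_⟩
  · calc _ ≤ #B + #B + 2 := (card_union_le _ _).trans (add_le_add ((card_union_le _ _).trans
          (add_le_add card_image_le card_image_le)) card_le_two)
      _ ≤ 2 * t + 2 := by omega
  obtain ⟨j, hj, rfl⟩ := hg.exists_eq_of_adj_head hmax hy
  obtain ⟨i, hi, hji⟩ := hg.exists_eq (j + 1) hj
  have hhead : g j ∈ heads Γ m p (t + 1) := hg.mem_heads_of_adj hp hj hy
  have hpos : pos i = j + 1 := huniq _ _ hj hi hji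
  rw [hji]
  simp only [mem_union, mem_image, mem_insert, mem_singleton, nextTo, positions, mem_filter,
    mem_range]
  by_cases hend : i = 0 ∨ i = m - 1
  · exact .inl (.inr (hend.imp (congrArg p) (congrArg p)))
  by_cases hiB : i ∈ B
  · exact .inl (.inl (.inl ⟨i, hiB, rfl⟩))
  by_cases hiB' : i - 1 ∈ B
  · exact .inl (.inl (.inr ⟨i - 1, hiB', congrArg p (by omega)⟩))
  -- both edges of `p` at `y` are kept, so one of the two `p`-neighbours of `y` precedes it on `g`
  have hnext := hstep i (by omega) (hkept i (by omega) hiB)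
  have hprev := hstep (i - 1) (by omega) (hkept (i - 1) (by omega) hiB')
  rw [show i - 1 + 1 = i by omega] at hprev
  have hne : pos (i - 1) ≠ pos (i + 1) := fun h => by
    have := hinj _ _ (by omega) (by omega) h
    omega
  rcases (by omega : pos (i - 1) = j ∨ pos (i + 1) = j) with h | h
  · refine .inr (.inl ⟨i - 1, ⟨by omega, ?_⟩, congrArg p (by omega)⟩)
    rwa [← hgpos (i - 1) (by omega), h]
  · refine .inr (.inr ⟨i + 1, ⟨by omega, ?_⟩, rfl⟩)
    rwa [← hgpos (i + 1) (by omega), h]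

/-- If no edge of the block is lost then `g` traverses the block in one direction. -/
lemma IsRearrangement.block_neighbors_subset (hg : IsRearrangement Γ m p t g)
    (hp : IsPathSeq Γ m p) (hmax : NoLongerPath Γ m) {ℓ k : ℕ} (hℓ : 0 < ℓ)
    (hkept : ∀ i ∈ block m ℓ k, i + 1 < m → ∃ a, a + 1 < m ∧ edgeAt g a = edgeAt p i) :
    (∀ i ∈ block m ℓ k, Γ.Adj (g 0) (p i) → p i ∈ afterSet m p ℓ (heads Γ m p (t + 1)) k) ∨
    (∀ i ∈ block m ℓ k, Γ.Adj (g 0) (p i) → p i ∈ beforeSet m p ℓ (heads Γ m p (t + 1)) k) := by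
  obtain ⟨pos, hgpos, huniq, hinj, hstep⟩ := hg.exists_position hp
  have hmem (i : ℕ) := mem_block (m := m) (k := k) (i := i) hℓ
  have hdir := succ_or_pred_of_no_backtrack (f := pos) (a := k * ℓ) (b := min m ((k + 1) * ℓ))
    (fun i hi hib => hstep i (by omega) (hkept i ((hmem i).2 (by omega)) (by omega)))
    (fun i _ hib h => by have := hinj _ _ (by omega) (by omega) h; omega)
  have hpred (i : ℕ) (hi : i < m) (hadj : Γ.Adj (g 0) (p i)) :
      ∃ j, pos i = j + 1 ∧ g j ∈ heads Γ m p (t + 1) := by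
    obtain ⟨j, hj, h⟩ := hg.exists_eq_of_adj_head hmax hadj
    exact ⟨j, huniq _ _ hj hi h, hg.mem_heads_of_adj hp hj (h ▸ hadj)⟩
  refine hdir.imp (fun hs i hi hadj => ?_) fun hs i hi hadj => ?_ <;>
    refine mem_image_of_mem _ (mem_filter.2 ⟨hi, ?_⟩) <;>
    obtain ⟨him, hki, hik⟩ := (hmem i).1 hi <;>
    obtain ⟨j, hj, hjh⟩ := hpred i him hadj
  · refine or_iff_not_imp_left.2 fun hfirst => ?_
    have := hs (i - 1) (by omega) (by omega)
    rw [show i - 1 + 1 = i by omega] at this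
    rwa [← hgpos (i - 1) (by omega), show pos (i - 1) = j by omega]
  · refine or_iff_not_imp_left.2 fun hlast => ?_
    have hnext := (hmem _).1 (not_not.1 hlast)
    have := hs i (by omega) (by omega)
    rwa [← hgpos (i + 1) (by omega), show pos (i + 1) = j by omega]

end Rotations

/-! ### Growth of the set of heads -/

section Growth

variable {V : Type*} {R Γ : SimpleGraph V} {m ℓ k t : ℕ} {p : ℕ → V} {a b d : ℝ}

lemma card_block_le (hℓ : 0 < ℓ) : #(block m ℓ k) ≤ ℓ :=
  calc #(block m ℓ k) ≤ #(Ico (k * ℓ) ((k + 1) * ℓ)) :=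
        card_le_card fun i hi => mem_Ico.2 ((mem_block hℓ).1 hi).2
    _ = ℓ := by rw [Nat.card_Ico, add_mul, one_mul, Nat.add_sub_cancel_left]

lemma mem_positions_filter_of_mem_block {Y : Finset V} {i : ℕ} (hi : i ∈ block m ℓ k)
    (hY : p i ∈ Y) : i ∈ {i ∈ positions m p Y | i / ℓ = k} := by
  simp only [block, positions, mem_filter] at hi ⊢
  exact ⟨⟨hi.1, hY⟩, hi.2⟩

lemma card_afterSet_le (hℓ : 0 < ℓ) (Y : Finset V) :
    #(afterSet m p ℓ Y k) ≤ #{i ∈ positions m p Y | i / ℓ = k} + 1 := by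
  have hsub : {i ∈ block m ℓ k | i = k * ℓ ∨ p (i - 1) ∈ Y} ⊆
      insert (k * ℓ) ({i ∈ positions m p Y | i / ℓ = k}.image (· + 1)) := fun i hi => by
    obtain ⟨hi, h⟩ := mem_filter.1 hi
    rw [mem_block hℓ] at hi
    refine mem_insert.2 (or_iff_not_imp_left.2 fun h0 => mem_image.2 ⟨i - 1, ?_, by omega⟩)
    exact mem_positions_filter_of_mem_block ((mem_block hℓ).2 (by omega)) (h.resolve_left h0)
  calc #(afterSet m p ℓ Y k) ≤ _ := card_image_le.trans (card_le_card hsub)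
    _ ≤ _ := (card_insert_le _ _).trans (Nat.succ_le_succ card_image_le)

lemma card_beforeSet_le (hℓ : 0 < ℓ) (Y : Finset V) :
    #(beforeSet m p ℓ Y k) ≤ #{i ∈ positions m p Y | i / ℓ = k} + 1 := by
  have hsub : {i ∈ block m ℓ k | i + 1 ∉ block m ℓ k ∨ p (i + 1) ∈ Y} ⊆
      insert (min m ((k + 1) * ℓ) - 1)
        ({i ∈ positions m p Y | i / ℓ = k}.image (· - 1)) := fun i hi => by
    obtain ⟨hi, h⟩ := mem_filter.1 hi
    by_cases hlast : i + 1 ∈ block m ℓ k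
    · exact mem_insert_of_mem (mem_image.2 ⟨i + 1,
        mem_positions_filter_of_mem_block hlast (h.resolve_left (not_not.2 hlast)), by omega⟩)
    · rw [mem_block hℓ] at hi hlast
      exact mem_insert.2 (.inl (by omega))
  calc #(beforeSet m p ℓ Y k) ≤ _ := card_image_le.trans (card_le_card hsub)
    _ ≤ _ := (card_insert_le _ _).trans (Nat.succ_le_succ card_image_le)

lemma IsPathSeq.sum_card_positions_filter_le (hp : IsPathSeq Γ m p) (Y : Finset V) (K : ℕ) :
    ∑ k ∈ range K, #{i ∈ positions m p Y | i / ℓ = k} ≤ #Y := by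
  refine le_trans ?_ (hp.card_positions_le Y)
  rw [← card_biUnion fun a _ b _ hab => disjoint_filter.2 fun i _ ha hb => hab (ha ▸ hb)]
  exact card_le_card (biUnion_subset.2 fun k _ => filter_subset _ _)

/-- The sets that can contain the neighbours, inside block `k`, of a head: the first two are for
blocks that lose no edge and are traversed forwards or backwards, the last one for all others. -/
noncomputable def candidates (m : ℕ) (p : ℕ → V) (ℓ : ℕ) (Y : Finset V) :
    Fin 3 → ℕ → Finset V
  | 0, k => afterSet m p ℓ Y k
  | 1, k => beforeSet m p ℓ Y k
  | 2, k => (block m ℓ k).image p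

lemma card_candidates_le (hℓ : 0 < ℓ) (Y : Finset V) (c : Fin 3) :
    #(candidates m p ℓ Y c k) ≤
      #{i ∈ positions m p Y | i / ℓ = k} + 1 + if c = 2 then ℓ else 0 :=
  match c with
  | 0 => card_afterSet_le hℓ Y
  | 1 => card_beforeSet_le hℓ Y
  | 2 => (card_image_le.trans (card_block_le hℓ)).trans (Nat.le_add_left _ _)

lemma IsPathSeq.sum_card_candidates_le (hp : IsPathSeq Γ m p) (hℓ : 0 < ℓ) (Y : Finset V) {K : ℕ}
    {τ : ℕ → Fin 3} (hτ : #{k ∈ range K | τ k = 2} ≤ t) :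
    ∑ k ∈ range K, #(candidates m p ℓ Y (τ k) k) ≤ #Y + K + t * ℓ :=
  calc ∑ k ∈ range K, #(candidates m p ℓ Y (τ k) k)
      ≤ ∑ k ∈ range K, (#{i ∈ positions m p Y | i / ℓ = k} + 1 + if τ k = 2 then ℓ else 0) :=
        sum_le_sum fun k _ => card_candidates_le hℓ Y (τ k)
    _ = ∑ k ∈ range K, #{i ∈ positions m p Y | i / ℓ = k} + K + #{k ∈ range K | τ k = 2} * ℓ := by
        simp only [sum_add_distrib, sum_const, card_range, ← sum_filter, smul_eq_mul, mul_one]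
    _ ≤ #Y + K + t * ℓ := by
        gcongr
        exact hp.sum_card_positions_filter_le Y K

/-- Applies the edge bound to every candidate set `D c k` and the set of the `x ∈ X` that use it;
this incurs the additive error `b` only `3 * K` times. -/
lemma sum_card_neighbors_le_of_choice
    (hcount : ∀ X Y : Finset V, (pairCount R (X ×ˢ Y) : ℝ) ≤ a * (#X * #Y) + b)
    (X : Finset V) (K : ℕ) (D : Fin 3 → ℕ → Finset V) (σ : V → ℕ → Fin 3) :
    (∑ x ∈ X, ∑ k ∈ range K, #{y ∈ D (σ x k) k | R.Adj x y} : ℝ) ≤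
      a * ∑ x ∈ X, ∑ k ∈ range K, (#(D (σ x k) k) : ℝ) + 3 * K * b := by
  have hsplit (f : V → Fin 3 → ℕ → ℝ) : ∑ x ∈ X, ∑ k ∈ range K, f x (σ x k) k =
      ∑ k ∈ range K, ∑ c : Fin 3, ∑ x ∈ X with σ x k = c, f x c k := by
    rw [sum_comm]
    refine sum_congr rfl fun k _ => ?_
    rw [← sum_fiberwise X (fun x => σ x k)]
    exact sum_congr rfl fun c _ => sum_congr rfl fun _ hx => by rw [(mem_filter.1 hx).2]
  rw [hsplit fun x c k => #{y ∈ D c k | R.Adj x y}, hsplit fun _ c k => #(D c k)]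
  have hterm (k : ℕ) (c : Fin 3) : ∑ x ∈ X with σ x k = c, (#{y ∈ D c k | R.Adj x y} : ℝ) ≤
      a * ∑ x ∈ X with σ x k = c, (#(D c k) : ℝ) + b := by
    have := hcount {x ∈ X | σ x k = c} (D c k)
    rw [pairCount_product, Nat.cast_sum] at this
    rwa [sum_const, nsmul_eq_mul]
  refine (sum_le_sum fun k _ => sum_le_sum fun c _ => hterm k c).trans_eq ?_
  simp only [sum_add_distrib, sum_const, card_univ, Fintype.card_fin, card_range, nsmul_eq_mul,
    ← mul_sum]
  push_cast
  ring

variable [Fintype V]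

lemma exists_candidates_of_mem_heads (hp : IsPathSeq Γ m p) (hmax : NoLongerPath Γ m)
    (hℓ : 0 < ℓ) {K : ℕ} (hK : m ≤ K * ℓ) {x : V} (hx : x ∈ heads Γ m p t) :
    ∃ τ : ℕ → Fin 3, #{k ∈ range K | τ k = 2} ≤ t ∧ ∀ y, Γ.Adj x y →
      ∃ k ∈ range K, y ∈ candidates m p ℓ (heads Γ m p (t + 1)) (τ k) k := by
  obtain ⟨g, hg, rfl⟩ := mem_heads.1 hx
  obtain ⟨B, hB, hkept⟩ := hg.exists_lost
  have hblock (k : ℕ) : ∃ c : Fin 3, (c = 2 → k ∈ B.image (· / ℓ)) ∧ ∀ i ∈ block m ℓ k,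
      Γ.Adj (g 0) (p i) → p i ∈ candidates m p ℓ (heads Γ m p (t + 1)) c k := by
    by_cases hkB : k ∈ B.image (· / ℓ)
    · exact ⟨2, fun _ => hkB, fun i hi _ => mem_image_of_mem _ hi⟩
    · rcases hg.block_neighbors_subset hp hmax hℓ fun i hi him => hkept i him fun hiB =>
        hkB (mem_image.2 ⟨i, hiB, (mem_filter.1 hi).2⟩) with h | h
      · exact ⟨0, fun h0 => absurd h0 (by decide), h⟩
      · exact ⟨1, fun h0 => absurd h0 (by decide), h⟩
  choose τ hτB hτ using hblock
  refine ⟨τ, ?_, fun y hy => ?_⟩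
  · calc #{k ∈ range K | τ k = 2} ≤ #(B.image (· / ℓ)) :=
          card_le_card fun k hk => hτB k (mem_filter.1 hk).2
      _ ≤ t := card_image_le.trans hB
  · obtain ⟨j, hj, rfl⟩ := hg.exists_eq_of_adj_head hmax hy
    obtain ⟨i, hi, hji⟩ := hg.exists_eq (j + 1) hj
    rw [hji] at hy ⊢
    exact ⟨i / ℓ, mem_range.2 ((Nat.div_lt_iff_lt_mul hℓ).2 (by omega)),
      hτ _ i (mem_filter.2 ⟨mem_range.2 hi, rfl⟩) hy⟩

/-- Cutting the path into `K` blocks of length `ℓ`, one more rotation enlarges a linear-sized set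
of heads as long as it contains a set `X` of many vertices of large degree. -/
lemma card_mul_le_card_heads_succ (hR : R ≤ Γ) (hp : IsPathSeq Γ m p) (hmax : NoLongerPath Γ m)
    (ha : 0 ≤ a) (hcount : ∀ X Y : Finset V, (pairCount R (X ×ˢ Y) : ℝ) ≤ a * (#X * #Y) + b)
    (hℓ : 0 < ℓ) {K : ℕ} (hK : m ≤ K * ℓ) {X : Finset V} (hX : X ⊆ heads Γ m p t)
    (hd : ∀ x ∈ X, d ≤ deg R x) :
    #X * d ≤ a * (#X * (#(heads Γ m p (t + 1)) + K + t * ℓ)) + 3 * K * b := by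
  have hchoice : ∀ x ∈ X, _ := fun x hx => exists_candidates_of_mem_heads hp hmax hℓ hK (hX hx)
  choose! σ hσ hcover using hchoice
  let D := candidates m p ℓ (heads Γ m p (t + 1))
  calc #X * d ≤ ∑ x ∈ X, ∑ k ∈ range K, (#{y ∈ D (σ x k) k | R.Adj x y} : ℝ) := by
        rw [← nsmul_eq_mul, ← sum_const]
        refine sum_le_sum fun x hx => (hd x hx).trans ?_
        rw [deg_eq_card_filter]
        refine mod_cast (card_le_card fun y hy => ?_).trans card_biUnion_le
        have hy := (mem_filter.1 hy).2
        obtain ⟨k, hk, hyk⟩ := hcover x hx y (hR hy)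
        exact mem_biUnion.2 ⟨k, hk, mem_filter.2 ⟨hyk, hy⟩⟩
    _ ≤ a * ∑ x ∈ X, ∑ k ∈ range K, (#(D (σ x k) k) : ℝ) + 3 * K * b :=
        sum_card_neighbors_le_of_choice hcount X K D σ
    _ ≤ a * (#X * (#(heads Γ m p (t + 1)) + K + t * ℓ)) + 3 * K * b := by
        gcongr
        rw [← nsmul_eq_mul, ← sum_const]
        exact sum_le_sum fun x hx => mod_cast hp.sum_card_candidates_le hℓ _ (hσ x hx)

lemma card_heads_mul_le_pairCount_nextTo (hR : R ≤ Γ) (hp : IsPathSeq Γ m p)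
    (hmax : NoLongerPath Γ m) (hdeg : ∀ x, d ≤ deg R x) :
    #(heads Γ m p t) * (d - (2 * t + 2)) ≤
      (pairCount R (heads Γ m p t ×ˢ nextTo m p (heads Γ m p (t + 1))) : ℝ) := by
  set D := nextTo m p (heads Γ m p (t + 1))
  rw [pairCount_product, Nat.cast_sum, ← nsmul_eq_mul, ← sum_const]
  refine sum_le_sum fun x hx => ?_
  obtain ⟨E, hE, hcover⟩ := exists_neighbors_subset_nextTo hp hmax hx
  have hsub : ({y | R.Adj x y} : Finset V) ⊆ E ∪ {y ∈ D | R.Adj x y} := fun y hy => by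
    have hy := (mem_filter.1 hy).2
    rcases mem_union.1 (hcover y (hR hy)) with h | h
    · exact mem_union_left _ h
    · exact mem_union_right _ (mem_filter.2 ⟨h, hy⟩)
  have hle : deg R x ≤ (2 * t + 2) + #{y ∈ D | R.Adj x y} := by
    rw [deg_eq_card_filter]
    exact (card_le_card hsub).trans ((card_union_le _ _).trans (by gcongr))
  have hle : (deg R x : ℝ) ≤ (2 * t + 2) + #{y ∈ D | R.Adj x y} := mod_cast hle
  linarith [hdeg x]

/-- Otherwise there would be too many edges between the heads and the few vertices next to the heads
of the following round. -/
lemma two_mul_card_heads_le (hR : R ≤ Γ) (hp : IsPathSeq Γ m p) (hmax : NoLongerPath Γ m)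
    (ha : 0 ≤ a) (hb : 0 ≤ b)
    (hcount : ∀ X Y : Finset V,
      (pairCount R (X ×ˢ Y) : ℝ) ≤ a * (#X * #Y) + (#X + #Y + 1) * b)
    (hdeg : ∀ x, d ≤ deg R x) (hne : (heads Γ m p t).Nonempty)
    (hd : 2 * t + 2 + 4 * a * #(heads Γ m p t) + 5 * b < d) :
    2 * #(heads Γ m p t) ≤ #(heads Γ m p (t + 1)) := by
  have hlow := card_heads_mul_le_pairCount_nextTo (t := t) hR hp hmax hdeg
  have hDX := hp.card_nextTo_le (heads Γ m p (t + 1))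
  set X := heads Γ m p t
  set D := nextTo m p (heads Γ m p (t + 1))
  by_contra! hlt
  have hDX : (#D + 1 : ℝ) ≤ 4 * #X := mod_cast (by omega : #D + 1 ≤ 4 * #X)
  have hX1 : (1 : ℝ) ≤ #X := mod_cast hne.card_pos
  refine absurd (hlow.trans (hcount X D)) (not_le.2 ?_)
  calc a * (#X * #D) + (#X + #D + 1) * b ≤ a * (#X * (4 * #X)) + 5 * #X * b := by
        gcongr <;> linarith [hX1]
    _ = #X * (4 * a * #X + 5 * b) := by ring
    _ < #X * (d - (2 * t + 2)) := by gcongr; linarith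

end Growth

/-! ### Rotations reach more than half of the vertices -/

section GrowingSequences

lemma le_or_two_pow_le {f : ℕ → ℕ} (hf : Monotone f) (h0 : 1 ≤ f 0) {M : ℝ} {T : ℕ}
    (hdouble : ∀ t < T, (f t : ℝ) < M → 2 * f t ≤ f (t + 1)) : M ≤ f T ∨ 2 ^ T ≤ f T := by
  induction T with
  | zero => exact .inr (by simpa using h0)
  | succ T ih =>
    rcases le_or_gt M (f T) with hM | hM
    · exact .inl (hM.trans (mod_cast hf T.le_succ))
    · have := (ih fun t ht => hdouble t (ht.trans T.lt_succ_self)).resolve_left (not_le.2 hM)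
      have := hdouble T T.lt_succ_self hM
      exact .inr (by rw [pow_succ]; omega)

lemma min_mul_le_of_step {f : ℕ → ℝ} {N κ δ a : ℝ} (hN : 0 ≤ N) (hδ : 0 ≤ δ) (hκ : κ ≤ a)
    (h0 : κ * N ≤ f 0) {J : ℕ}
    (hstep : ∀ j < J, ∀ s, κ ≤ s → s ≤ a → s * N ≤ f j → (s + δ) * N ≤ f (j + 1)) :
    min a (κ + J * δ) * N ≤ f J := by
  induction J with
  | zero => simpa [hκ] using h0
  | succ J ih =>
    have hJ : (0 : ℝ) ≤ J * δ := by positivity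
    refine le_trans ?_ (hstep J J.lt_succ_self (min a (κ + J * δ)) (le_min hκ (by linarith))
      (min_le_left _ _) (ih fun j hj => hstep j (hj.trans J.lt_succ_self)))
    gcongr
    push_cast
    rcases min_cases a (κ + J * δ) with ⟨h, -⟩ | ⟨h, -⟩ <;> rw [h]
    · exact (min_le_left _ _).trans (by linarith)
    · exact (min_le_right _ _).trans (by linarith)

lemma exists_block_length {n : ℕ} {z : ℝ} (hz : 1 ≤ z) :
    ∃ ℓ K : ℕ, 0 < ℓ ∧ n ≤ K * ℓ ∧ (ℓ : ℝ) ≤ z ∧ (K : ℝ) ≤ 2 * n / z + 1 := by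
  have hℓ : 0 < ⌊z⌋₊ := Nat.floor_pos.2 hz
  refine ⟨⌊z⌋₊, n / ⌊z⌋₊ + 1, hℓ, ?_, Nat.floor_le (by linarith), ?_⟩
  · rw [add_mul, one_mul]
    exact (Nat.lt_div_mul_add hℓ).le
  · have hz2 : z / 2 ≤ ⌊z⌋₊ := by
      have : (1 : ℝ) ≤ ⌊z⌋₊ := mod_cast hℓ
      linarith [Nat.lt_floor_add_one z]
    push_cast
    gcongr
    calc ((n / ⌊z⌋₊ : ℕ) : ℝ) ≤ n / ⌊z⌋₊ := Nat.cast_div_le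
      _ ≤ n / (z / 2) := by gcongr
      _ = 2 * n / z := by rw [div_div_eq_mul_div, mul_comm]

lemma natLog_two_le_two_mul_log (n : ℕ) : (Nat.log 2 n : ℝ) ≤ 2 * log n := by
  have h1 : (Nat.log 2 n : ℝ) ≤ logb 2 n := by exact_mod_cast natLog_le_logb n 2
  refine h1.trans ?_
  rw [logb, div_le_iff₀ (log_pos one_lt_two)]
  nlinarith [log_two_gt_d9, log_natCast_nonneg n]

end GrowingSequences

section Pseudorandom

variable {n m t : ℕ} {R Γ : SimpleGraph (Fin n)} {q ε A B κ : ℝ} {p : ℕ → Fin n}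

/-- The pseudorandomness required of a sparse graph `R` of density about `q`: few vertices have
small degree, and there are not too many edges between two sets. The bound `pairCount_le` is sharp
for sets of linear size, while `pairCount_le_log` is meaningful for small ones. -/
structure IsPseudorandom (R : SimpleGraph (Fin n)) (q ε A B : ℝ) : Prop where
  card_deg_lt_le : ∀ θ : ℝ, 0 ≤ θ → θ ≤ 1 / 2 →
    (#{x | (deg R x : ℝ) < (θ + 3 * ε / 4) * (q * n)} : ℝ) ≤ θ * n
  pairCount_le : ∀ X Y : Finset (Fin n),
    (pairCount R (X ×ˢ Y) : ℝ) ≤ (1 + ε / 20) * q * (#X * #Y) + A * n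
  pairCount_le_log : ∀ X Y : Finset (Fin n),
    (pairCount R (X ×ˢ Y) : ℝ) ≤ B * q * (#X * #Y) + (#X + #Y + 1) * (2 * log n)

/-- The numerical conditions under which `O(log n)` rotations of a path in a supergraph of a
pseudorandom graph reach more than `n / 2` heads; `κ * n` is where the doubling phase ends. -/
structure RotationConditions (ε A B κ q : ℝ) (n : ℕ) : Prop where
  eps_pos : 0 < ε
  eps_le : ε ≤ 1 / 10
  nonneg_A : 0 ≤ A
  nonneg_B : 0 ≤ B
  kappa_pos : 0 < κ
  kappa_le : κ ≤ ε / 20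
  mul_kappa_le : 4 * B * κ ≤ ε / 8
  le_log : 2 / ε + 2 ≤ log n
  log_le : log n ≤ ε ^ 2 / 2460 * n
  log_le_density : 96 * log n ≤ ε * (q * n)
  log_le_density' : 3690 * A * log n ≤ ε ^ 2 * κ * (q * n)

lemma eventually_rotationConditions (hε : 0 < ε) (hε1 : ε ≤ 1 / 10) (hA : 0 ≤ A) (hB : 0 ≤ B) :
    ∃ κ L : ℝ, 0 < L ∧ ∀ᶠ n : ℕ in atTop, ∀ q : ℝ, L * log n ≤ q * n →
      RotationConditions ε A B κ q n := by
  let κ := ε / (32 * (B + 1))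
  have hκ : 0 < κ := by positivity
  let L := max (96 / ε) (3690 * A / (ε ^ 2 * κ))
  refine ⟨κ, L, lt_max_of_lt_left (by positivity), ?_⟩
  have hlog_large : ∀ᶠ n : ℕ in atTop, 2 / ε + 2 ≤ log n :=
    (tendsto_log_atTop.comp tendsto_natCast_atTop_atTop).eventually_ge_atTop _
  have hlog_small : ∀ᶠ n : ℕ in atTop, ‖log n‖ ≤ ε ^ 2 / 2460 * ‖(n : ℝ)‖ :=
    tendsto_natCast_atTop_atTop.eventually
      (isLittleO_log_id_atTop.bound (by positivity : 0 < ε ^ 2 / 2460))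
  filter_upwards [hlog_large, hlog_small] with n hn hn' q hq
  rw [norm_of_nonneg (Nat.cast_nonneg n)] at hn'
  refine ⟨hε, hε1, hA, hB, hκ, ?_, ?_, hn, (le_norm_self _).trans hn', ?_, ?_⟩
  · exact div_le_div_of_nonneg_left hε.le (by norm_num) (by linarith)
  · rw [mul_div_assoc', div_le_div_iff₀ (by positivity) (by norm_num)]
    linarith
  · rw [← div_le_iff₀' hε, mul_div_right_comm]
    exact (mul_le_mul_of_nonneg_right (le_max_left _ _) (log_natCast_nonneg n)).trans hq
  · rw [← div_le_iff₀' (by positivity), mul_div_right_comm]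
    exact (mul_le_mul_of_nonneg_right (le_max_right _ _) (log_natCast_nonneg n)).trans hq

namespace RotationConditions

lemma two_le_log (hc : RotationConditions ε A B κ q n) : 2 ≤ log n := by
  have := hc.eps_pos
  linarith [hc.le_log, (by positivity : 0 ≤ 2 / ε)]

lemma density_pos (hc : RotationConditions ε A B κ q n) : 0 < q * n :=
  pos_of_mul_pos_right (by linarith [hc.log_le_density, hc.two_le_log]) hc.eps_pos.le

lemma card_pos (hc : RotationConditions ε A B κ q n) : (0 : ℝ) < n :=
  (Nat.cast_nonneg n).lt_of_ne fun h => hc.density_pos.ne' (by rw [← h, mul_zero])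

lemma prob_pos (hc : RotationConditions ε A B κ q n) : 0 < q :=
  pos_of_mul_pos_left hc.density_pos hc.card_pos.le

lemma exists_blocks (hc : RotationConditions ε A B κ q n) :
    ∃ ℓ K : ℕ, 0 < ℓ ∧ n ≤ K * ℓ ∧ 3 * log n * ℓ ≤ ε / 20 * n ∧ (K : ℝ) ≤ ε / 20 * n ∧
      3 * K * A ≤ ε / 10 * κ * (q * n) := by
  have hε := hc.eps_pos
  have hlog := hc.two_le_log
  have hn := hc.card_pos
  obtain ⟨ℓ, K, hℓ, hK, hℓz, hKz⟩ := exists_block_length (n := n) (z := ε / 20 * n / (3 * log n))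
    (by rw [le_div_iff₀ (by positivity)]; nlinarith [hc.log_le, hc.eps_le])
  have hK123 : K * ε ≤ 123 * log n := by
    have h : 2 * n / (ε / 20 * n / (3 * log n)) = 120 * log n / ε := by field_simp; norm_num
    rw [h, ← sub_le_iff_le_add, le_div_iff₀ hε] at hKz
    linarith [hc.eps_le]
  refine ⟨ℓ, K, hℓ, hK, ?_, ?_, ?_⟩
  · rwa [le_div_iff₀' (by positivity)] at hℓz
  · refine le_of_mul_le_mul_right (hK123.trans ?_) hε
    nlinarith [hc.log_le]
  · refine le_of_mul_le_mul_right ?_ hε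
    nlinarith [mul_le_mul_of_nonneg_right hK123 hc.nonneg_A, hc.log_le_density']

end RotationConditions

namespace IsPseudorandom

lemma le_deg (h : IsPseudorandom R q ε A B) (x : Fin n) : 3 * ε / 4 * (q * n) ≤ deg R x := by
  by_contra! hlt
  have h0 := h.card_deg_lt_le 0 le_rfl (by norm_num)
  have hpos : 0 < #{x | (deg R x : ℝ) < (0 + 3 * ε / 4) * (q * n)} :=
    Finset.card_pos.2 ⟨x, by simpa using hlt⟩
  rw [zero_mul] at h0
  exact absurd h0 (not_le.2 (mod_cast hpos))

lemma exists_large_deg (h : IsPseudorandom R q ε A B) {s : ℝ} (hs : s ≤ 1 / 2) (hκ0 : 0 ≤ κ)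
    (hκ : κ ≤ s) {X : Finset (Fin n)} (hX : s * n ≤ #X) :
    ∃ X' ⊆ X, κ * n ≤ #X' ∧ ∀ x ∈ X', (s - κ + 3 * ε / 4) * (q * n) ≤ deg R x := by
  let low (x : Fin n) : Prop := (deg R x : ℝ) < (s - κ + 3 * ε / 4) * (q * n)
  refine ⟨{x ∈ X | ¬low x}, filter_subset _ _, ?_, fun x hx => not_lt.1 (mem_filter.1 hx).2⟩
  have hlow : (#{x | low x} : ℝ) ≤ (s - κ) * n := h.card_deg_lt_le _ (by linarith) (by linarith)
  have hsum : (#{x ∈ X | low x} : ℝ) + #{x ∈ X | ¬low x} = #X :=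
    mod_cast card_filter_add_card_filter_not low
  have hle : (#{x ∈ X | low x} : ℝ) ≤ #{x | low x} :=
    mod_cast card_le_card (filter_subset_filter _ (subset_univ X))
  linarith

lemma linear_growth (h : IsPseudorandom R q ε A B) (hc : RotationConditions ε A B κ q n)
    (hR : R ≤ Γ) (hp : IsPathSeq Γ m p) (hmax : NoLongerPath Γ m) (ht : (t : ℝ) ≤ 3 * log n)
    {s : ℝ} (hκs : κ ≤ s) (hs : s ≤ 1 / 2) (hX : s * n ≤ #(heads Γ m p t)) :
    (s + ε / 4) * n ≤ #(heads Γ m p (t + 1)) := by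
  have hε := hc.eps_pos
  have hε1 := hc.eps_le
  have hκ0 := hc.kappa_pos
  have hκ := hc.kappa_le
  have hn := hc.card_pos
  have hq := hc.prob_pos
  obtain ⟨ℓ, K, hℓ, hK, hℓ1, hK1, hKA⟩ := hc.exists_blocks
  obtain ⟨X, hXsub, hXc, hXd⟩ := h.exists_large_deg hs hκ0.le hκs hX
  have hmK : m ≤ K * ℓ := hp.le_card.trans ((Fintype.card_fin n).trans_le hK)
  have hgrow := card_mul_le_card_heads_succ hR hp hmax (by positivity) h.pairCount_le hℓ
    hmK hXsub hXd
  set y := (#(heads Γ m p (t + 1)) : ℝ)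
  have hX0 : (0 : ℝ) < #X := lt_of_lt_of_le (by positivity) hXc
  have herr : 3 * K * (A * n) ≤ ε / 10 * (#X * (q * n)) :=
    calc 3 * K * (A * n) = 3 * K * A * n := by ring
      _ ≤ ε / 10 * κ * (q * n) * n := by gcongr
      _ = ε / 10 * (κ * n * (q * n)) := by ring
      _ ≤ ε / 10 * (#X * (q * n)) := by gcongr
  have hsize : y + K + t * ℓ ≤ y + ε / 10 * n := by
    linarith [mul_le_mul_of_nonneg_right ht (Nat.cast_nonneg (α := ℝ) ℓ)]
  have hdiv : (s - κ + 3 * ε / 4) * n ≤ (1 + ε / 20) * (y + ε / 10 * n) + ε / 10 * n := by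
    refine le_of_mul_le_mul_left ?_ (mul_pos hq hX0)
    calc q * #X * ((s - κ + 3 * ε / 4) * n) = #X * ((s - κ + 3 * ε / 4) * (q * n)) := by ring
      _ ≤ (1 + ε / 20) * q * (#X * (y + ε / 10 * n)) + ε / 10 * (#X * (q * n)) :=
        hgrow.trans (by gcongr)
      _ = q * #X * ((1 + ε / 20) * (y + ε / 10 * n) + ε / 10 * n) := by ring
  by_contra! hlt
  have hcontra : s - κ + 3 * ε / 4 < (1 + ε / 20) * (s + ε / 4 + ε / 10) + ε / 10 := by
    refine lt_of_mul_lt_mul_right (hdiv.trans_lt ?_) hn.le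
    nlinarith
  nlinarith

lemma doubling_phase (h : IsPseudorandom R q ε A B) (hc : RotationConditions ε A B κ q n)
    (hR : R ≤ Γ) (hp : IsPathSeq Γ m p) (hmax : NoLongerPath Γ m) :
    κ * n ≤ #(heads Γ m p (Nat.log 2 n + 1)) := by
  have hne (t : ℕ) : (heads Γ m p t).Nonempty :=
    ⟨p 0, mem_heads.2 ⟨p, hp.isRearrangement_self t, rfl⟩⟩
  have hq := hc.prob_pos
  have hB := hc.nonneg_B
  have hlog := hc.two_le_log
  refine (le_or_two_pow_le (f := fun t => #(heads Γ m p t))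
    (fun s t hst => card_le_card (heads_mono hst)) (hne 0).card_pos
    fun t ht hsmall => ?_).resolve_right fun hpow => ?_
  · refine two_mul_card_heads_le hR hp hmax (by positivity) (by positivity) h.pairCount_le_log
      h.le_deg (hne t) ?_
    have ht : (t : ℝ) ≤ Nat.log 2 n := mod_cast Nat.lt_succ_iff.1 ht
    have hsmall : 4 * (B * q) * #(heads Γ m p t) ≤ ε / 8 * (q * n) :=
      calc 4 * (B * q) * #(heads Γ m p t) ≤ 4 * (B * q) * (κ * n) := by gcongr
        _ = 4 * B * κ * (q * n) := by ring
        _ ≤ ε / 8 * (q * n) := mul_le_mul_of_nonneg_right hc.mul_kappa_le hc.density_pos.le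
    linarith [natLog_two_le_two_mul_log n, hc.log_le_density, mul_pos hc.eps_pos hc.density_pos]
  · have hcard := card_le_univ (heads Γ m p (Nat.log 2 n + 1))
    rw [Fintype.card_fin] at hcard
    exact absurd (hpow.trans hcard) (not_le.2 (Nat.lt_pow_succ_log_self one_lt_two n))

/-- The heads double until there are linearly many, and then grow by `ε / 4 * n` each time. -/
theorem exists_card_heads_ge (h : IsPseudorandom R q ε A B)
    (hc : RotationConditions ε A B κ q n) (hR : R ≤ Γ) (hp : IsPathSeq Γ m p)
    (hmax : NoLongerPath Γ m) : ∃ t, (1 / 2 + ε / 4) * n ≤ #(heads Γ m p t) := by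
  have hε := hc.eps_pos
  have hε1 := hc.eps_le
  have hκ0 := hc.kappa_pos
  have hκ := hc.kappa_le
  let T := Nat.log 2 n + 1
  let J := ⌈2 / ε⌉₊
  have hT : ((T + J : ℕ) : ℝ) ≤ 3 * log n := by
    have := Nat.ceil_lt_add_one (by positivity : 0 ≤ 2 / ε)
    push_cast [T, J]
    linarith [natLog_two_le_two_mul_log n, hc.le_log]
  have hhalf : 1 / 2 ≤ κ + J * (ε / 4) := by
    have : 2 ≤ J * ε := (div_le_iff₀ hε).1 (Nat.le_ceil _)
    linarith
  have hgrow (j : ℕ) (hj : j ≤ J) (s : ℝ) (hκs : κ ≤ s) (hs : s ≤ 1 / 2)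
      (hX : s * n ≤ #(heads Γ m p (T + j))) :
      (s + ε / 4) * n ≤ #(heads Γ m p (T + (j + 1))) :=
    h.linear_growth (t := T + j) hc hR hp hmax ((Nat.cast_le.2 (by omega)).trans hT) hκs hs hX
  have hreach := min_mul_le_of_step (f := fun j => #(heads Γ m p (T + j))) hc.card_pos.le
    (by positivity) (by linarith) (h.doubling_phase hc hR hp hmax) (a := 1 / 2) (J := J)
    fun j hj => hgrow j hj.le
  rw [min_eq_left hhalf] at hreach
  exact ⟨_, hgrow J le_rfl (1 / 2) (by linarith) le_rfl hreach⟩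

end IsPseudorandom

lemma pairCount_eq_sum_deg_of_closed {X Z : Finset (Fin n)} (hX : X ⊆ Z)
    (hZ : ∀ x ∈ Z, ∀ y ∉ Z, ¬R.Adj x y) : (pairCount R (X ×ˢ Z) : ℝ) = ∑ x ∈ X, (deg R x : ℝ) := by
  rw [pairCount_product, Nat.cast_sum]
  refine sum_congr rfl fun x hx => ?_
  rw [deg_eq_card_filter]
  congr 2
  ext y
  simp only [mem_filter, mem_univ, true_and, and_iff_right_iff_imp]
  exact fun hxy => by_contra fun hy => hZ x (hX hx) y hy hxy

lemma card_mul_le_pairCount_of_closed {X Z : Finset (Fin n)} (hX : X ⊆ Z)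
    (hZ : ∀ x ∈ Z, ∀ y ∉ Z, ¬R.Adj x y) {d : ℝ} (hd : ∀ x ∈ X, d ≤ deg R x) :
    #X * d ≤ pairCount R (X ×ˢ Z) := by
  rw [pairCount_eq_sum_deg_of_closed hX hZ, ← nsmul_eq_mul]
  exact card_nsmul_le_sum X _ d hd

namespace IsPseudorandom

lemma exists_adj_notMem_of_small (h : IsPseudorandom R q ε A B)
    (hc : RotationConditions ε A B κ q n) {Z : Finset (Fin n)} (hZ : Z.Nonempty)
    (hZn : (#Z : ℝ) ≤ κ * n) : ∃ x ∈ Z, ∃ y ∉ Z, R.Adj x y := by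
  by_contra! hclosed
  have hq := hc.prob_pos
  have hB := hc.nonneg_B
  have hlog := hc.two_le_log
  have hZ1 : (1 : ℝ) ≤ #Z := mod_cast hZ.card_pos
  have hpos := mul_pos hc.eps_pos hc.density_pos
  have hdense : B * q * (#Z * #Z) ≤ #Z * (ε / 32 * (q * n)) :=
    calc B * q * (#Z * #Z) ≤ B * q * (#Z * (κ * n)) := by gcongr
      _ = #Z * (4 * B * κ * (q * n)) / 4 := by ring
      _ ≤ #Z * (ε / 8 * (q * n)) / 4 := by
        have := mul_le_mul_of_nonneg_right hc.mul_kappa_le hc.density_pos.le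
        gcongr
      _ = #Z * (ε / 32 * (q * n)) := by ring
  have hlog : ((#Z : ℝ) + #Z + 1) * (2 * log n) ≤ #Z * (ε / 16 * (q * n)) :=
    calc ((#Z : ℝ) + #Z + 1) * (2 * log n) ≤ (3 * #Z) * (2 * log n) := by gcongr; linarith
      _ = #Z * (6 * log n) := by ring
      _ ≤ #Z * (ε / 16 * (q * n)) :=
        mul_le_mul_of_nonneg_left (by linarith [hc.log_le_density]) (Nat.cast_nonneg _)
  have hdeg := card_mul_le_pairCount_of_closed subset_rfl hclosed fun x _ => h.le_deg x
  nlinarith [h.pairCount_le_log Z Z, mul_pos (zero_lt_one.trans_le hZ1) hpos]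

lemma exists_adj_notMem_of_large (h : IsPseudorandom R q ε A B)
    (hc : RotationConditions ε A B κ q n) {Z : Finset (Fin n)} {s : ℝ} (hκs : κ ≤ s)
    (hs : s ≤ 1 / 2) (hZ : #Z = s * n) : ∃ x ∈ Z, ∃ y ∉ Z, R.Adj x y := by
  by_contra! hclosed
  have hε := hc.eps_pos
  have hn := hc.card_pos
  have hq := hc.prob_pos
  obtain ⟨X, hXZ, hXc, hXd⟩ := h.exists_large_deg hs hc.kappa_pos.le hκs hZ.ge
  have hX0 : (0 : ℝ) < #X := lt_of_lt_of_le (mul_pos hc.kappa_pos hn) hXc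
  have hA : A ≤ ε / 10 * (κ * (q * n)) := by
    refine le_of_mul_le_mul_left ?_ hε
    have := mul_le_mul_of_nonneg_left hc.two_le_log hc.nonneg_A
    nlinarith [hc.log_le_density', hc.eps_le, hc.nonneg_A]
  have herr : A * n ≤ ε / 10 * (#X * (q * n)) :=
    calc A * n ≤ ε / 10 * (κ * (q * n)) * n := by gcongr
      _ = ε / 10 * (κ * n * (q * n)) := by ring
      _ ≤ ε / 10 * (#X * (q * n)) := by gcongr
  have hcontra : s - κ + 3 * ε / 4 ≤ (1 + ε / 20) * s + ε / 10 := by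
    refine le_of_mul_le_mul_left ?_ (mul_pos hX0 (mul_pos hq hn))
    calc #X * (q * n) * (s - κ + 3 * ε / 4) = #X * ((s - κ + 3 * ε / 4) * (q * n)) := by ring
      _ ≤ (1 + ε / 20) * q * (#X * #Z) + A * n :=
        (card_mul_le_pairCount_of_closed hXZ hclosed hXd).trans (h.pairCount_le X Z)
      _ ≤ (1 + ε / 20) * q * (#X * (s * n)) + ε / 10 * (#X * (q * n)) := by rw [hZ]; gcongr
      _ = #X * (q * n) * ((1 + ε / 20) * s + ε / 10) := by ring
  nlinarith [hc.kappa_le]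

theorem exists_adj_notMem (h : IsPseudorandom R q ε A B) (hc : RotationConditions ε A B κ q n)
    {Z : Finset (Fin n)} (hZ : Z.Nonempty) (hZn : 2 * #Z ≤ n) :
    ∃ x ∈ Z, ∃ y ∉ Z, R.Adj x y := by
  rcases le_total (#Z : ℝ) (κ * n) with hsmall | hlarge
  · exact h.exists_adj_notMem_of_small hc hZ hsmall
  · have hZn : 2 * (#Z : ℝ) ≤ n := mod_cast hZn
    refine h.exists_adj_notMem_of_large hc ((le_div_iff₀ hc.card_pos).2 hlarge) ?_
      (div_mul_cancel₀ _ hc.card_pos.ne').symm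
    rw [div_le_iff₀ hc.card_pos]
    linarith

end IsPseudorandom

end Pseudorandom

/-! ### Closing a longest path to a Hamilton cycle -/

section Closing

variable {V : Type*} {G R Γ Γ' : SimpleGraph V} {m t : ℕ} {p g : ℕ → V}

lemma IsPathSeq.of_le (hg : IsPathSeq Γ m g) (h : Γ ≤ Γ') : IsPathSeq Γ' m g :=
  ⟨hg.inj, fun i hi => h (hg.adj i hi)⟩

lemma IsPathSeq.reverse (hg : IsPathSeq Γ m g) : IsPathSeq Γ m (fun i => g (m - 1 - i)) where
  inj i j hi hj h := by
    have := hg.inj (m - 1 - i) (m - 1 - j) (by omega) (by omega) h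
    omega
  adj i hi := by
    have h := hg.adj (m - 1 - (i + 1)) (by omega)
    rw [show m - 1 - (i + 1) + 1 = m - 1 - i by omega] at h
    exact h.symm

lemma IsPathSeq.cyclicShift (hg : IsPathSeq Γ m g) (hclosed : Γ.Adj (g 0) (g (m - 1))) (i : ℕ) :
    IsPathSeq Γ m (fun k => g ((i + k) % m)) where
  inj a b ha hb h := by
    have hmod := hg.inj _ _ (Nat.mod_lt _ (by omega)) (Nat.mod_lt _ (by omega)) h
    have hab : a ≡ b [MOD m] := Nat.ModEq.add_left_cancel' i hmod
    rwa [Nat.ModEq, Nat.mod_eq_of_lt ha, Nat.mod_eq_of_lt hb] at hab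
  adj k hk := by
    have hlt : (i + k) % m < m := Nat.mod_lt _ (by omega)
    rw [show (i + (k + 1)) % m = ((i + k) % m + 1) % m by rw [← add_assoc, Nat.mod_add_mod]]
    rcases (Nat.succ_le_of_lt hlt).lt_or_eq with h | h
    · rw [Nat.mod_eq_of_lt h]
      exact hg.adj _ h
    · rw [← Nat.succ_eq_add_one, h, Nat.mod_self, show (i + k) % m = m - 1 by omega]
      exact hclosed.symm

/-- The graph formed by the edges of the vertex sequence `g 0, …, g (m - 1)`. -/
def seqGraph (m : ℕ) (g : ℕ → V) : SimpleGraph V :=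
  SimpleGraph.fromEdgeSet (edgeAt g '' Set.Iio (m - 1))

lemma IsPathSeq.seqGraph_le (hg : IsPathSeq Γ m g) : seqGraph m g ≤ Γ := by
  refine (SimpleGraph.fromEdgeSet_le _).2 ?_
  rintro _ ⟨⟨i, hi, rfl⟩, -⟩
  exact hg.adj i (Nat.add_lt_of_lt_sub hi)

lemma IsPathSeq.isPathSeq_seqGraph (hg : IsPathSeq Γ m g) : IsPathSeq (seqGraph m g) m g :=
  ⟨hg.inj, fun i hi => (SimpleGraph.fromEdgeSet_adj _).2
    ⟨⟨i, Nat.lt_sub_of_add_lt hi, rfl⟩, (hg.adj i hi).ne⟩⟩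

lemma ncard_edgeSet_sup_seqGraph_le (R : SimpleGraph V) (m : ℕ) (g : ℕ → V) :
    (R ⊔ seqGraph m g).edgeSet.ncard ≤ R.edgeSet.ncard + m := by
  rw [SimpleGraph.edgeSet_sup]
  refine (Set.ncard_union_le _ _).trans (Nat.add_le_add_left ?_ _)
  rw [seqGraph, SimpleGraph.edgeSet_fromEdgeSet]
  calc _ ≤ (edgeAt g '' Set.Iio (m - 1)).ncard :=
        Set.ncard_le_ncard Set.sdiff_subset ((Set.finite_Iio _).image _)
    _ ≤ (Set.Iio (m - 1)).ncard := Set.ncard_image_le (Set.finite_Iio _)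
    _ ≤ m := by rw [← coe_Iio, Set.ncard_coe_finset, Nat.card_Iio]; exact Nat.sub_le _ _

lemma IsPathSeq.cycleGraph_isContained (hg : IsPathSeq Γ m g)
    (hclosed : Γ.Adj (g 0) (g (m - 1))) : (SimpleGraph.cycleGraph m).IsContained Γ := by
  have hstep (u v : Fin m) (h : (u - v).val = 1) : Γ.Adj (g u) (g v) := by
    have hu := u.2
    have hv := v.2
    rw [Fin.sub_def] at h
    rcases le_or_gt v.val u.val with hle | hlt
    · have hsum : m - v.val + u.val = (u.val - v.val) + m := by omega
      simp only [hsum, Nat.add_mod_right, Nat.mod_eq_of_lt (show u.val - v.val < m by omega)] at h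
      rw [show u.val = v.val + 1 by omega]
      exact (hg.adj v (by omega)).symm
    · simp only [Nat.mod_eq_of_lt (show m - v.val + u.val < m by omega)] at h
      rwa [show u.val = 0 by omega, show v.val = m - 1 by omega]
  refine ⟨⟨⟨fun u => g u, fun {u v} h => ?_⟩, fun u v h => Fin.ext (hg.inj _ _ u.2 v.2 h)⟩⟩
  rcases SimpleGraph.cycleGraph_adj'.1 h with h | h
  · exact hstep u v h
  · exact (hstep v u h).symm

lemma exists_isPathSeq_noLongerPath [Finite V] [Nonempty V] (Γ : SimpleGraph V) :
    ∃ m g, 0 < m ∧ IsPathSeq Γ m g ∧ NoLongerPath Γ m := by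
  have := Fintype.ofFinite V
  have hone : ∃ g, IsPathSeq Γ 1 g :=
    ⟨fun _ => Classical.arbitrary V, fun _ _ _ _ _ => by omega, fun _ _ => by omega⟩
  have hV : 1 ≤ Fintype.card V := Fintype.card_pos
  obtain ⟨g, hg⟩ := Nat.findGreatest_spec (P := fun m => ∃ g, IsPathSeq Γ m g) hV hone
  exact ⟨_, g, Nat.le_findGreatest hV hone, hg,
    fun m' g' hg' => Nat.le_findGreatest hg'.le_card ⟨g', hg'⟩⟩

section Finite

variable [Fintype V]

/-- The last vertices of the longest paths of `Γ` that start at `v`. -/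
noncomputable def ends (Γ : SimpleGraph V) (v : V) : Finset V :=
  {w | ∃ m g, IsPathSeq Γ m g ∧ NoLongerPath Γ m ∧ g 0 = v ∧ g (m - 1) = w}

lemma mem_ends {v w : V} : w ∈ ends Γ v ↔
    ∃ m g, IsPathSeq Γ m g ∧ NoLongerPath Γ m ∧ g 0 = v ∧ g (m - 1) = w := by
  simp only [ends, mem_filter, mem_univ, true_and]

lemma heads_reverse_subset_ends (hmax : NoLongerPath Γ m) (p : ℕ → V) (t : ℕ) :
    heads Γ m (fun i => p (m - 1 - i)) t ⊆ ends Γ (p 0) := fun w hw => by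
  obtain ⟨g, hg, rfl⟩ := mem_heads.1 hw
  refine mem_ends.2 ⟨m, _, hg.toIsPathSeq.reverse, hmax, ?_, ?_⟩
  · simpa only [Nat.sub_zero, Nat.sub_self] using hg.last_eq
  · simp only [Nat.sub_self]

lemma card_heads_le (hm : 0 < m) : #(heads Γ m p t) ≤ m := by
  have hsub : heads Γ m p t ⊆ (range m).image p := fun x hx => by
    obtain ⟨g, hg, rfl⟩ := mem_heads.1 hx
    obtain ⟨j, hj, h⟩ := hg.exists_eq 0 hm
    exact mem_image.2 ⟨j, mem_range.2 hj, h.symm⟩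
  simpa only [card_range] using (card_le_card hsub).trans card_image_le

/-- Opening a closed longest path at a vertex with a neighbour outside would make it longer. -/
lemma IsPathSeq.eq_card_of_closed (hg : IsPathSeq Γ m g) (hmax : NoLongerPath Γ m)
    (hclosed : Γ.Adj (g 0) (g (m - 1))) (hhalf : Fintype.card V ≤ 2 * m)
    (hexp : ∀ Z : Finset V, Z.Nonempty → 2 * #Z ≤ Fintype.card V →
      ∃ x ∈ Z, ∃ y ∉ Z, Γ.Adj x y) : m = Fintype.card V := by
  by_contra hne
  have hcard : #((range m).image g)ᶜ = Fintype.card V - m := by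
    rw [card_compl, hg.card_image_range]
  have hlt := hg.le_card.lt_of_ne hne
  obtain ⟨x, hx, y, hy, hxy⟩ := hexp ((range m).image g)ᶜ (Finset.card_pos.1 (by omega)) (by omega)
  rw [mem_compl] at hx
  rw [mem_compl, not_not] at hy
  obtain ⟨i, hi, rfl⟩ := mem_image.1 hy
  rw [mem_range] at hi
  have hlonger := (hg.cyclicShift hclosed i).cons (y := x)
    (by rw [add_zero, Nat.mod_eq_of_lt hi]; exact hxy.symm)
    fun k _ h => hx (mem_image.2 ⟨_, mem_range.2 (Nat.mod_lt _ (by omega)), h⟩)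
  exact absurd (hmax _ _ hlonger) (by omega)

lemma isHamiltonian_of_cycleGraph_isContained [DecidableEq V] (hV : 3 ≤ Fintype.card V)
    (h : (SimpleGraph.cycleGraph (Fintype.card V)).IsContained Γ) : Γ.IsHamiltonian := fun _ =>
  let ⟨v, w, hw⟩ := (SimpleGraph.cycleGraph_isContained_iff hV).1 h
  ⟨v, w, SimpleGraph.Walk.isHamiltonianCycle_iff_isCycle_and_length_eq.2 hw⟩

/-- Pósa's closing argument with a sparse witness: adding a longest path of `G` to `R` gives a
sparse graph `Γ` whose longest paths are longest in `G`; a pair in `hboost` closes one of them. -/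
theorem isHamiltonian_of_boosters [DecidableEq V] {a : ℝ} (hV : 3 ≤ Fintype.card V)
    (ha : Fintype.card V ≤ 2 * a) (hR : R ≤ G)
    (hrot : ∀ Γ m p, R ≤ Γ → IsPathSeq Γ m p → NoLongerPath Γ m →
      ∃ t, a ≤ #(heads Γ m p t))
    (hexp : ∀ Z : Finset V, Z.Nonempty → 2 * #Z ≤ Fintype.card V →
      ∃ x ∈ Z, ∃ y ∉ Z, R.Adj x y)
    (hboost : ∀ Γ ≤ G, Γ.edgeSet.ncard ≤ R.edgeSet.ncard + Fintype.card V →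
      ∀ S : Finset V, a ≤ #S → (∀ v ∈ S, a ≤ #(ends Γ v)) →
      ∃ v ∈ S, ∃ w ∈ ends Γ v, G.Adj v w) : G.IsHamiltonian := by
  have : Nonempty V := Fintype.card_pos_iff.1 (by omega)
  obtain ⟨m, p, hm, hp, hmax⟩ := exists_isPathSeq_noLongerPath G
  let Γ := R ⊔ seqGraph m p
  have hΓG : Γ ≤ G := sup_le hR hp.seqGraph_le
  have hpΓ : IsPathSeq Γ m p := hp.isPathSeq_seqGraph.of_le le_sup_right
  have hmaxΓ : NoLongerPath Γ m := fun m' g hg => hmax m' g (hg.of_le hΓG)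
  have hedges : Γ.edgeSet.ncard ≤ R.edgeSet.ncard + Fintype.card V :=
    (ncard_edgeSet_sup_seqGraph_le R m p).trans (Nat.add_le_add_left hp.le_card _)
  obtain ⟨t, ht⟩ := hrot Γ m p le_sup_left hpΓ hmaxΓ
  have hends : ∀ v ∈ heads Γ m p t, a ≤ #(ends Γ v) := fun v hv => by
    obtain ⟨g, hg, rfl⟩ := mem_heads.1 hv
    obtain ⟨t', ht'⟩ := hrot Γ m _ le_sup_left hg.toIsPathSeq.reverse hmaxΓ
    exact ht'.trans (Nat.cast_le.2 (card_le_card (heads_reverse_subset_ends hmaxΓ g t')))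
  obtain ⟨v, -, w, hw, hvw⟩ := hboost Γ hΓG hedges _ ht hends
  obtain ⟨m', g, hg, hmax', rfl, rfl⟩ := mem_ends.1 hw
  obtain rfl : m' = m := le_antisymm (hmaxΓ _ _ hg) (hmax' _ _ hpΓ)
  have hhalf : Fintype.card V ≤ 2 * m' := by
    have : (#(heads Γ m' p t) : ℝ) ≤ m' := mod_cast card_heads_le hm
    exact_mod_cast (by linarith : (Fintype.card V : ℝ) ≤ 2 * m')
  have hcard := (hg.of_le hΓG).eq_card_of_closed hmax hvw hhalf fun Z hZ hZn =>
    let ⟨x, hx, y, hy, hxy⟩ := hexp Z hZ hZn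
    ⟨x, hx, y, hy, hR hxy⟩
  exact isHamiltonian_of_cycleGraph_isContained hV
    (hcard ▸ (hg.of_le hΓG).cycleGraph_isContained hvw)

end Finite

end Closing

/-! ### Pósa subgraphs and the choice of constants -/

namespace PosaFamily

variable {n : ℕ} {p ε ε' θ : ℝ} {H : SimpleGraph (Fin n)}

lemma anti (hH : PosaFamily n p ε H) (hp : 0 ≤ p) (h : ε' ≤ ε) : PosaFamily n p ε' H := by
  obtain ⟨v, hv, hanti, hdeg⟩ := hH
  refine ⟨v, hv, hanti, fun i hi => (hdeg i hi).trans ?_⟩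
  have : ε' * n * p ≤ ε * n * p := by gcongr
  linarith

lemma card_lt_deg_le (hH : PosaFamily n p ε H) (hn : 3 ≤ n) (hp : 0 ≤ p) (hθ0 : 0 ≤ θ)
    (hθ : θ ≤ 1 / 2) :
    (#{x | (1 - θ - ε) * (n * p) + 2 * p < deg H x} : ℝ) ≤ θ * n := by
  obtain ⟨v, hv, hanti, hdeg⟩ := hH
  by_contra! hlarge
  set k := ⌊θ * n⌋₊
  have hk : (k : ℝ) ≤ θ * n := Nat.floor_le (by positivity)
  have hk' : θ * n < k + 1 := Nat.lt_floor_add_one _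
  have hkn : 2 * k ≤ n := by
    have : 2 * (k : ℝ) ≤ n := by nlinarith [(n.cast_nonneg : (0 : ℝ) ≤ n)]
    exact_mod_cast this
  have hkcard : k < #{i | (1 - θ - ε) * (n * p) + 2 * p < deg H (v i)} := by
    have hcard := hv.sum_comp fun x => if (1 - θ - ε) * (n * p) + 2 * p < deg H x then 1 else 0
    rw [← card_filter, ← card_filter] at hcard
    rw [hcard]
    exact_mod_cast hk.trans_lt hlarge
  obtain ⟨j, hj, hkj⟩ : ∃ j, (1 - θ - ε) * (n * p) + 2 * p < deg H (v j) ∧ k ≤ j := by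
    by_contra! hall
    refine absurd hkcard (not_lt.2 ?_)
    refine (card_le_card_of_injOn Fin.val (fun i hi => ?_) Fin.val_injective.injOn).trans_eq
      (card_range k)
    exact mem_coe.2 (mem_range.2 (hall i (mem_filter.1 hi).2))
  let i : Fin n := ⟨k - 2, by omega⟩
  have hi : ((i.1 : ℝ) + 1) < n / 2 := by
    rw [lt_div_iff₀ two_pos]
    exact_mod_cast (by omega : (k - 2 + 1) * 2 < n)
  have hki : (k : ℝ) ≤ i.1 + 2 := by exact_mod_cast (by omega : k ≤ k - 2 + 2)
  have hij : (deg H (v j) : ℝ) ≤ deg H (v i) :=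
    Nat.cast_le.2 (hanti i j (Fin.le_def.2 ((Nat.sub_le k 2).trans hkj)))
  have hround : (n - ((i.1 : ℝ) + 1)) * p ≤ (n - θ * n + 2) * p := by gcongr; linarith
  linarith [hdeg i hi]

end PosaFamily

section Constants

variable {ε l δ C : ℝ}

/-- The constants of the proof: `l` is the relative error of the Chernoff bounds, `δ` the rate at
which a sparse subgraph is sampled and `C` the constant of the theorem. -/
structure ResilienceConstants (ε l δ C : ℝ) : Prop where
  eps_pos : 0 < ε
  eps_le : ε ≤ 1 / 10
  error_eq : l = ε / 100
  rate_pos : 0 < δ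
  rate_le : δ ≤ 1 / 2
  exists_tilt : ∃ θ : ℝ, 0 ≤ θ ∧ (θ + 2 * l) * (2 * δ) + exp (-θ) ≤ l ^ 2 * ε / 16
  sample_le : 35 ≤ δ * C * ε * l
  edges_le : 6 / l + 2 ≤ 2 * δ * C
  entropy_le : 2 ≤ l ^ 2 * ε / 16 * C

namespace ResilienceConstants

lemma error_pos (hc : ResilienceConstants ε l δ C) : 0 < l := by
  rw [hc.error_eq]
  exact div_pos hc.eps_pos (by norm_num)

lemma error_le (hc : ResilienceConstants ε l δ C) : l ≤ 1 / 1000 := by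
  linarith [hc.error_eq, hc.eps_le]

lemma const_pos (hc : ResilienceConstants ε l δ C) : 0 < C :=
  pos_of_mul_pos_right (two_pos.trans_le hc.entropy_le)
    (div_nonneg (mul_nonneg (sq_nonneg l) hc.eps_pos.le) (by norm_num))

end ResilienceConstants

lemma exists_tilt_rate {l c : ℝ} (hl1 : l ≤ 1 / 2) (hc : 0 < c) (hc1 : c ≤ 1) :
    ∃ θ δ : ℝ, 0 ≤ θ ∧ 0 < δ ∧ δ ≤ 1 / 2 ∧ (θ + 2 * l) * (2 * δ) + exp (-θ) ≤ c := by
  have hθ : 0 ≤ -log (c / 2) := neg_nonneg.2 (log_nonpos (by positivity) (by linarith))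
  refine ⟨-log (c / 2), c / (4 * (-log (c / 2) + 1)), hθ, by positivity, ?_, ?_⟩
  · rw [div_le_div_iff₀ (by positivity) two_pos]
    linarith
  · rw [neg_neg, exp_log (by positivity)]
    have : (-log (c / 2) + 2 * l) * (2 * (c / (4 * (-log (c / 2) + 1)))) ≤ c / 2 := by
      rw [mul_div_assoc', mul_div_assoc', div_le_div_iff₀ (by positivity) two_pos]
      nlinarith
    linarith

lemma exists_resilienceConstants (hε : 0 < ε) (hε1 : ε ≤ 1 / 10) :
    ∃ l δ κ C : ℝ, ResilienceConstants ε l δ C ∧ ∀ᶠ n : ℕ in atTop, ∀ p : ℝ,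
      C * log n ≤ p * n → RotationConditions ε (6 / l) (2 / δ) κ (δ * p) n := by
  let l := ε / 100
  have hl : 0 < l := by positivity
  have hl1 : l ≤ 1 / 1000 := by linarith [show l = ε / 100 from rfl]
  let c := l ^ 2 * ε / 16
  have hc : 0 < c := by positivity
  have hc1 : c ≤ 1 := by
    have : l ^ 2 ≤ 1 := by nlinarith
    have : l ^ 2 * ε ≤ 1 * (1 / 10) := by gcongr
    linarith [show c = l ^ 2 * ε / 16 from rfl]
  obtain ⟨θ, δ, hθ, hδ, hδ1, htilt⟩ := exists_tilt_rate (l := l) (by linarith) hc hc1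
  obtain ⟨κ, L, hL, hrot⟩ := eventually_rotationConditions hε hε1
    (by positivity : 0 ≤ 6 / l) (by positivity : 0 ≤ 2 / δ)
  obtain ⟨C, hC⟩ : ∃ C, 35 / (δ * ε * l) + (6 / l + 2) / (2 * δ) + L / δ + 2 / c ≤ C := ⟨_, le_rfl⟩
  have hsummands : 0 ≤ 35 / (δ * ε * l) ∧ 0 ≤ (6 / l + 2) / (2 * δ) ∧ 0 ≤ L / δ ∧ 0 ≤ 2 / c :=
    ⟨by positivity, by positivity, by positivity, by positivity⟩
  refine ⟨l, δ, κ, C, ⟨hε, hε1, rfl, hδ, hδ1, ⟨θ, hθ, htilt⟩, ?_, ?_, ?_⟩, ?_⟩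
  · have : 35 ≤ C * (δ * ε * l) := (div_le_iff₀ (by positivity)).1 (by linarith)
    linarith
  · exact (div_le_iff₀' (by positivity)).1 (by linarith)
  · exact (div_le_iff₀' hc).1 (by linarith)
  · filter_upwards [hrot] with n hn p hp
    refine hn _ ?_
    have hLC : L ≤ δ * C := (div_le_iff₀' hδ).1 (by linarith)
    calc L * log n ≤ δ * C * log n := by gcongr
      _ = δ * (C * log n) := by ring
      _ ≤ δ * (p * n) := by gcongr
      _ = δ * p * n := by ring

end Constants

/-! ### Typical graphs -/

section TypicalGraphs

variable {n : ℕ} {p ε l δ C η : ℝ}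

/-- The properties of `G` used in the proof, which hold a.a.s. for the random graph of density `p`:
few edges between large sets, few edges between small sets, no small degrees, and many edges of `G`
between the ends of longest paths of each sparse subgraph. -/
structure IsTypical (G : SimpleGraph (Fin n)) (p ε l δ : ℝ) : Prop where
  pairCount_le : ∀ X Y : Finset (Fin n),
    (pairCount G (X ×ˢ Y) : ℝ) ≤ p * (1 + 2 * l) * (#X * #Y) + 2 * n / l
  pairCount_le_log : ∀ X Y : Finset (Fin n),
    (pairCount G (X ×ˢ Y) : ℝ) ≤ 2 * p * (#X * #Y) + 2 * (#X + #Y + 1) * log n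
  le_deg : ∀ x, p * (1 - 2 * l) * (n - 1) - 2 * log n / l ≤ deg G x
  le_pairCount_ends : ∀ Γ ≤ G, (Γ.edgeSet.ncard : ℝ) ≤ 2 * δ * (n ^ 2 * p) →
    ∀ S : Finset (Fin n), ε / 4 * n ≤ #S → (∀ v ∈ S, (n : ℝ) / 2 ≤ #(ends Γ v)) →
      (1 - 4 * l) * p * (#S * (n / 2 - 1)) ≤ pairCount G (pairSet S (ends Γ))

lemma deg_top (x : Fin n) : (deg (⊤ : SimpleGraph (Fin n)) x : ℝ) = n - 1 := by
  have : deg (⊤ : SimpleGraph (Fin n)) x = n - 1 := by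
    rw [deg, SimpleGraph.neighborSet_top, Set.ncard_compl, Set.ncard_singleton, Nat.card_fin]
  rw [this, Nat.cast_sub (Nat.one_le_of_lt x.2), Nat.cast_one]

lemma prob_exists_lt_pairCount_top_le (h0 : 0 ≤ p) (h1 : p ≤ 1) (hl0 : 0 < l) (hl1 : l ≤ 1 / 2) :
    prob ⊤ p (fun G : SimpleGraph (Fin n) => ∃ X Y : Finset (Fin n),
      p * (1 + 2 * l) * (#X * #Y) + 2 * n / l < pairCount G (X ×ˢ Y)) ≤ 4 ^ n * exp (-(2 * n)) := by
  refine (prob_mono h0 h1 fun G _ ⟨X, Y, hG⟩ => ⟨X, Y, lt_of_le_of_lt ?_ hG⟩).trans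
    ((prob_exists_lt_pairCount_le ⊤ h0 h1 hl0 hl1 (2 * n)).trans_eq (by rw [Fintype.card_fin]))
  gcongr
  exact pairCount_product_le _ X Y

lemma prob_exists_lt_pairCount_top_le' (h0 : 0 ≤ p) (h1 : p ≤ 1) (hn : 0 < n) :
    prob ⊤ p (fun G : SimpleGraph (Fin n) => ∃ X Y : Finset (Fin n),
      2 * p * (#X * #Y) + 2 * (#X + #Y + 1) * log n < pairCount G (X ×ˢ Y)) ≤ exp 2 / n := by
  have hn' : (0 : ℝ) < n := Nat.cast_pos.2 hn
  have hexp : (1 + exp (-log n)) ^ (2 * n) ≤ exp 2 := by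
    calc (1 + exp (-log n)) ^ (2 * n) ≤ exp (1 / n) ^ (2 * n) := by
          rw [exp_neg, exp_log hn', ← one_div, add_comm]
          gcongr
          exact add_one_le_exp _
      _ = exp 2 := by
          rw [← exp_nat_mul]
          congr 1
          push_cast
          field_simp
  refine (prob_mono h0 h1 fun G _ ⟨X, Y, hG⟩ => ⟨X, Y, lt_of_le_of_lt ?_ hG⟩).trans
    ((prob_exists_lt_pairCount_le' ⊤ h0 h1 (log n)).trans ?_)
  · rw [Fintype.card_fin, div_eq_inv_mul]
    nth_rw 1 [exp_neg, exp_log hn']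
    gcongr
  · gcongr
    exact pairCount_product_le _ X Y

lemma prob_exists_deg_lt_inv_le (F : SimpleGraph (Fin n)) (h0 : 0 ≤ p) (h1 : p ≤ 1) (hl0 : 0 < l)
    (hl1 : l ≤ 1 / 2) (hn : 0 < n) :
    prob F p (fun G => ∃ x, (deg G x : ℝ) < p * (1 - 2 * l) * deg F x - 2 * log n / l) ≤
      1 / n := by
  have hn' : (0 : ℝ) < n := Nat.cast_pos.2 hn
  refine (prob_exists_deg_lt_le F h0 h1 hl0 hl1 (2 * log n)).trans_eq ?_
  rw [Fintype.card_fin, exp_neg, mul_comm 2, exp_mul, exp_log hn', rpow_two]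
  field_simp

lemma two_pow_mul_exp_le {n : ℕ} {x : ℝ} (hx : 2 * n ≤ x) : 2 ^ n * exp (-x) ≤ exp (-n) := by
  calc 2 ^ n * exp (-x) ≤ exp 1 ^ n * exp (-(2 * n)) := by
        gcongr
        linarith [add_one_le_exp (1 : ℝ)]
    _ = exp (-n) := by
        rw [← exp_nat_mul, ← exp_add]
        ring_nf

lemma prob_exists_sparse_ends_le (hc : ResilienceConstants ε l δ C) (h0 : 0 ≤ p) (h1 : p ≤ 1)
    (hn : 4 ≤ n) (hlog : 1 ≤ log n) (hp : C * log n ≤ p * n) :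
    prob ⊤ p (fun G : SimpleGraph (Fin n) => ∃ Γ ≤ G,
      (Γ.edgeSet.ncard : ℝ) ≤ 2 * δ * (n ^ 2 * p) ∧ ∃ S : Finset (Fin n), ε / 4 * n ≤ #S ∧
        (∀ v ∈ S, (n : ℝ) / 2 ≤ #(ends Γ v)) ∧
        pairCount G (pairSet S (ends Γ)) < (1 - 4 * l) * p * (#S * (n / 2 - 1))) ≤ exp (-n) := by
  obtain ⟨θ, hθ0, hθ⟩ := hc.exists_tilt
  have hε := hc.eps_pos
  have hl := hc.error_le
  have hn' : (4 : ℝ) ≤ n := by exact_mod_cast hn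
  refine (prob_mono h0 h1 ?_).trans ((prob_exists_sparse_pairCount_lt_le ⊤ h0 h1 hc.error_pos.le
    (by linarith) hθ0 (2 * δ * (n ^ 2 * p)) (ε / 16 * n ^ 2)
    fun Γ S => pairSet S (ends Γ)).trans ?_)
  · rintro G - ⟨Γ, hΓ, hedges, S, hS, hends, hlt⟩
    have htop := le_pairCount_top_pairSet hends
    refine ⟨Γ, S, hΓ, hedges, le_trans ?_ htop, hlt.trans_le ?_⟩
    · calc ε / 16 * n ^ 2 = ε / 4 * n * (n / 4) := by ring
        _ ≤ #S * (n / 2 - 1) := by gcongr; linarith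
    · have : 0 ≤ 1 - 4 * l := by linarith
      gcongr
  · have hedges := two_mul_ncard_edgeSet_le (⊤ : SimpleGraph (Fin n))
    rw [Fintype.card_fin] at hedges
    rw [Fintype.card_finset, Fintype.card_fin, Nat.cast_pow, Nat.cast_two]
    have hentropy : 2 * n ≤ l ^ 2 * ε / 16 * (n ^ 2 * p) := by
      calc 2 * (n : ℝ) ≤ l ^ 2 * ε / 16 * C * (log n * n) := by
            gcongr
            · exact two_pos.le.trans hc.entropy_le
            · exact hc.entropy_le
            · exact le_mul_of_one_le_left n.cast_nonneg hlog
        _ = l ^ 2 * ε / 16 * (C * log n * n) := by ring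
        _ ≤ l ^ 2 * ε / 16 * (p * n * n) := by gcongr
        _ = _ := by ring
    refine le_trans ?_ (two_pow_mul_exp_le hentropy)
    gcongr
    have htilt := mul_le_mul_of_nonneg_right hθ (by positivity : 0 ≤ n ^ 2 * p)
    have hF := mul_le_mul_of_nonneg_left hedges (by positivity : 0 ≤ p * exp (-θ))
    nlinarith [mul_nonneg (mul_nonneg h0 (exp_pos (-θ)).le) (sq_nonneg (n : ℝ))]

lemma prob_not_isTypical_le (hc : ResilienceConstants ε l δ C) (h0 : 0 ≤ p) (h1 : p ≤ 1)
    (hn : 4 ≤ n) (hlog : 1 ≤ log n) (hp : C * log n ≤ p * n) :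
    prob ⊤ p (fun G : SimpleGraph (Fin n) => ¬ IsTypical G p ε l δ) ≤
      4 ^ n * exp (-(2 * n)) + exp 2 / n + 1 / n + exp (-n) := by
  have hl := hc.error_le
  refine le_trans (prob_mono h0 h1 fun G _ hG => ?_) <| (prob_or_le h0 h1).trans <| add_le_add
    ((prob_or_le h0 h1).trans <| add_le_add ((prob_or_le h0 h1).trans <| add_le_add
      (prob_exists_lt_pairCount_top_le h0 h1 hc.error_pos (by linarith))
      (prob_exists_lt_pairCount_top_le' h0 h1 (by omega)))
      (prob_exists_deg_lt_inv_le ⊤ h0 h1 hc.error_pos (by linarith) (by omega)))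
    (prob_exists_sparse_ends_le hc h0 h1 hn hlog hp)
  contrapose! hG
  obtain ⟨⟨⟨h, hlog⟩, hdeg⟩, hends⟩ := hG
  exact ⟨h, hlog, fun x => deg_top x ▸ hdeg x,
    fun Γ hΓ he S hS hT => hends Γ hΓ he S hS hT⟩

lemma four_mul_exp_neg_two_lt : 4 * exp (-2) < 3 / 5 := by
  have hexp : exp 2 = exp 1 ^ 2 := by rw [← exp_nat_mul, Nat.cast_two, mul_one]
  rw [exp_neg, ← div_eq_mul_inv, div_lt_iff₀ (exp_pos _), hexp]
  nlinarith [exp_one_gt_d9]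

lemma four_pow_mul_exp_neg_eq (n : ℕ) : 4 ^ n * exp (-(2 * n)) = (4 * exp (-2)) ^ n := by
  rw [mul_pow, ← exp_nat_mul]
  ring_nf

lemma eventually_prob_not_isTypical_le (hc : ResilienceConstants ε l δ C) (hη : 0 < η) :
    ∀ᶠ n : ℕ in atTop, ∀ p : ℝ, 0 ≤ p → p ≤ 1 → C * log n ≤ p * n →
      prob ⊤ p (fun G : SimpleGraph (Fin n) => ¬ IsTypical G p ε l δ) ≤ η := by
  have hpow : Tendsto (fun n : ℕ => 4 ^ n * exp (-(2 * n))) atTop (nhds 0) := by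
    simp only [four_pow_mul_exp_neg_eq]
    exact tendsto_pow_atTop_nhds_zero_of_lt_one (by positivity)
      (four_mul_exp_neg_two_lt.trans (by norm_num))
  have hexp : Tendsto (fun n : ℕ => exp (-n)) atTop (nhds 0) :=
    tendsto_exp_neg_atTop_nhds_zero.comp tendsto_natCast_atTop_atTop
  have hsum := ((hpow.add (tendsto_const_div_atTop_nhds_zero_nat (exp 2))).add
    (tendsto_const_div_atTop_nhds_zero_nat 1)).add hexp
  simp only [add_zero] at hsum
  have hlog : ∀ᶠ n : ℕ in atTop, 1 ≤ log n :=
    (tendsto_log_atTop.comp tendsto_natCast_atTop_atTop).eventually_ge_atTop 1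
  filter_upwards [hsum.eventually_le_const hη, hlog, eventually_ge_atTop 4] with n hle hlog hn
    p h0 h1 hp
  exact (prob_not_isTypical_le hc h0 h1 hn hlog hp).trans hle

end TypicalGraphs

/-! ### Resilience of typical graphs -/

section Resilience

variable {n : ℕ} {p ε l δ κ C θ : ℝ} {F G H R Γ : SimpleGraph (Fin n)}

lemma exists_sample (F : SimpleGraph (Fin n)) (hδ0 : 0 ≤ δ) (hδ1 : δ ≤ 1) (hl0 : 0 < l)
    (hl1 : l ≤ 1 / 2) (hn : 3 ≤ n) :
    ∃ R ≤ F, (∀ X Y : Finset (Fin n), (pairCount R (X ×ˢ Y) : ℝ) ≤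
        δ * (1 + 2 * l) * pairCount F (X ×ˢ Y) + 2 * n / l) ∧
      ∀ x, δ * (1 - 2 * l) * deg F x - 2 * log n / l ≤ deg R x := by
  have hpow : 4 ^ n * exp (-(2 * n)) < 3 / 5 := by
    rw [four_pow_mul_exp_neg_eq]
    have hlt := four_mul_exp_neg_two_lt
    exact (pow_le_of_le_one (by positivity) (by linarith) (by omega)).trans_lt hlt
  have hinv : 1 / (n : ℝ) ≤ 1 / 3 := by
    gcongr
    exact_mod_cast hn
  have hedges := prob_exists_lt_pairCount_le F hδ0 hδ1 hl0 hl1 (2 * n)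
  rw [Fintype.card_fin] at hedges
  have hdeg := prob_exists_deg_lt_inv_le F hδ0 hδ1 hl0 hl1 (by omega)
  have hlt := ((prob_or_le hδ0 hδ1).trans (add_le_add hedges hdeg)).trans_lt
    (by linarith : _ < (1 : ℝ))
  obtain ⟨R, hRF, hR⟩ := exists_not_of_prob_lt_one hδ0 hδ1 hlt
  push Not at hR
  exact ⟨R, hRF, hR⟩

lemma ResilienceConstants.le_sampled_deg (hc : ResilienceConstants ε l δ C) {N Λ : ℝ}
    (hΛ : 1 ≤ Λ) (hN : 35 * Λ ≤ δ * ε * N) (hθ : θ ≤ 1 / 2) :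
    (θ + 3 * ε / 4) * (δ * N) ≤
      δ * (1 - 2 * l) * ((θ + ε - 2 * l) * N - 3 - 2 * Λ) - 2 * Λ := by
  have hε := hc.eps_pos
  have hδ := hc.rate_pos
  have hl0 := hc.error_pos
  have hl1 := hc.error_le
  have hδN : 0 ≤ δ * N := by
    refine (pos_of_mul_pos_right (?_ : 0 < ε * (δ * N)) hε.le).le
    linarith
  have hmain : (θ + ε - 4 * l) * (δ * N) ≤ (1 - 2 * l) * (θ + ε - 2 * l) * (δ * N) := by
    gcongr
    nlinarith [hc.eps_le]
  have herror : δ * (1 - 2 * l) * (3 + 2 * Λ) ≤ 1 * (3 + 2 * Λ) := by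
    gcongr
    nlinarith [hc.rate_le]
  have hl : 4 * l * (δ * N) ≤ ε / 20 * (δ * N) := by
    gcongr
    linarith [hc.error_eq]
  linarith

lemma IsTypical.le_deg_sdiff (hG : IsTypical G p ε l δ) (h0 : 0 ≤ p) (h1 : p ≤ 1) (hl : 0 ≤ l)
    {x : Fin n} (hx : (deg H x : ℝ) ≤ (1 - θ - ε) * (n * p) + 2 * p) :
    (θ + ε - 2 * l) * (p * n) - 3 - 2 * (log n / l) ≤ deg (G \ H) x := by
  have hdeg := hG.le_deg x
  have hsub : (deg G x : ℝ) ≤ deg (G \ H) x + deg H x := by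
    simp only [deg_eq_pairCount]
    exact_mod_cast pairCount_le_sdiff_add G H _
  rw [mul_div_assoc] at hdeg
  nlinarith [mul_nonneg h0 hl]

lemma IsTypical.le_sampled_deg_sdiff (hG : IsTypical G p ε l δ) (hc : ResilienceConstants ε l δ C)
    (h0 : 0 ≤ p) (h1 : p ≤ 1) (hlog : 1 ≤ log n) (hp : C * log n ≤ p * n) (hθ : θ ≤ 1 / 2)
    {x : Fin n} (hx : (deg H x : ℝ) ≤ (1 - θ - ε) * (n * p) + 2 * p) :
    (θ + 3 * ε / 4) * (δ * p * n) ≤ δ * (1 - 2 * l) * deg (G \ H) x - 2 * log n / l := by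
  have hε := hc.eps_pos
  have hδ := hc.rate_pos
  have hl0 := hc.error_pos
  have hl1 := hc.error_le
  have hΛ : 1 ≤ log n / l := (one_le_div hl0).2 (by linarith)
  have hN : 35 * (log n / l) ≤ δ * ε * (p * n) := by
    rw [mul_div_assoc', div_le_iff₀ hl0]
    calc 35 * log n ≤ δ * C * ε * l * log n := by gcongr; exact hc.sample_le
      _ = δ * ε * (C * log n) * l := by ring
      _ ≤ δ * ε * (p * n) * l := by gcongr
  rw [mul_div_assoc 2, mul_assoc δ p]
  refine (hc.le_sampled_deg hΛ hN hθ).trans ?_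
  have : 0 ≤ 1 - 2 * l := by linarith
  gcongr
  exact hG.le_deg_sdiff h0 h1 hl0.le hx

lemma IsTypical.exists_isPseudorandom (hG : IsTypical G p ε l δ)
    (hc : ResilienceConstants ε l δ C) (hH : PosaFamily n p ε H) (h0 : 0 ≤ p) (h1 : p ≤ 1)
    (hn : 3 ≤ n) (hlog : 1 ≤ log n) (hp : C * log n ≤ p * n) :
    ∃ R ≤ G \ H, IsPseudorandom R (δ * p) ε (6 / l) (2 / δ) := by
  have hε := hc.eps_pos
  have hδ := hc.rate_pos
  have hl0 := hc.error_pos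
  have hl1 := hc.error_le
  obtain ⟨R, hRF, hedges, hdeg⟩ :=
    exists_sample (G \ H) hδ.le (hc.rate_le.trans (by norm_num)) hl0 (by linarith) hn
  refine ⟨R, hRF, fun θ hθ0 hθ => ?_, fun X Y => ?_, fun X Y => ?_⟩
  · refine le_trans (Nat.cast_le.2 (card_le_card fun x hx => ?_))
      (hH.card_lt_deg_le hn h0 hθ0 hθ)
    rw [mem_filter_univ] at hx ⊢
    contrapose! hx
    exact (hG.le_sampled_deg_sdiff hc h0 h1 hlog hp hθ hx).trans (hdeg x)
  · have hsmall : δ * (1 + 2 * l) ≤ 2 := by nlinarith [hc.rate_le]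
    have hsharp : (1 + 2 * l) * (1 + 2 * l) ≤ 1 + ε / 20 := by nlinarith [hc.error_eq]
    calc (pairCount R (X ×ˢ Y) : ℝ)
        ≤ δ * (1 + 2 * l) * pairCount (G \ H) (X ×ˢ Y) + 2 * n / l := hedges X Y
      _ ≤ δ * (1 + 2 * l) * (p * (1 + 2 * l) * (#X * #Y) + 2 * n / l) + 2 * n / l := by
          gcongr
          exact (Nat.cast_le.2 (pairCount_mono sdiff_le _)).trans (hG.pairCount_le X Y)
      _ = (1 + 2 * l) * (1 + 2 * l) * (δ * p * (#X * #Y)) +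
          (δ * (1 + 2 * l)) * (2 * n / l) + 2 * n / l := by ring
      _ ≤ (1 + ε / 20) * (δ * p * (#X * #Y)) + 2 * (2 * n / l) + 2 * n / l := by gcongr
      _ = (1 + ε / 20) * (δ * p) * (#X * #Y) + 6 / l * n := by ring
  · calc (pairCount R (X ×ˢ Y) : ℝ) ≤ pairCount G (X ×ˢ Y) :=
          Nat.cast_le.2 (pairCount_mono (hRF.trans sdiff_le) _)
      _ ≤ 2 * p * (#X * #Y) + 2 * (#X + #Y + 1) * log n := hG.pairCount_le_log X Y
      _ = 2 / δ * (δ * p) * (#X * #Y) + (#X + #Y + 1) * (2 * log n) := by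
          field_simp

lemma IsPseudorandom.ncard_edgeSet_add_le {B : ℝ} (hR : IsPseudorandom R (δ * p) ε (6 / l) B)
    (hc : ResilienceConstants ε l δ C) (h0 : 0 ≤ p) (hlog : 1 ≤ log n)
    (hp : C * log n ≤ p * n) : (R.edgeSet.ncard : ℝ) + n ≤ 2 * δ * (n ^ 2 * p) := by
  have hδ := hc.rate_pos
  have htotal := hR.pairCount_le univ univ
  rw [← two_mul_ncard_edgeSet, card_univ, Fintype.card_fin, Nat.cast_mul, Nat.cast_two] at htotal
  have hlinear : (6 / l + 2) * n ≤ 2 * δ * (p * n) * n := by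
    gcongr
    calc 6 / l + 2 ≤ 2 * δ * C := hc.edges_le
      _ ≤ 2 * δ * (C * log n) := by
          gcongr
          exact le_mul_of_one_le_right hc.const_pos.le hlog
      _ ≤ 2 * δ * (p * n) := by gcongr
  have hdense : (1 + ε / 20) * (δ * p) * (n * n) ≤ 2 * (δ * p) * (n * n) := by
    gcongr
    linarith [hc.eps_le]
  linarith

lemma pairCount_pairSet_le_sum_deg {S : Finset (Fin n)} {T : Fin n → Finset (Fin n)}
    (h : ∀ v ∈ S, ∀ w ∈ T v, G.Adj v w → H.Adj v w) :
    pairCount G (pairSet S T) ≤ ∑ v ∈ S, deg H v := by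
  rw [pairCount_pairSet]
  refine sum_le_sum fun v hv => ?_
  rw [deg_eq_card_filter]
  refine card_le_card fun w hw => ?_
  rw [mem_filter] at hw
  exact mem_filter.2 ⟨mem_univ w, h v hv w hw.1 hw.2⟩

/-- Fewer than half of the vertices lose more than about `(1 / 2 - ε) * n * p` edges to `H`, which
is less than the number of edges of `G` between any other vertex of `S` and its ends, on average. -/
lemma IsTypical.exists_adj_ends (hG : IsTypical G p ε l δ) (hH : PosaFamily n p ε H)
    (hε : 0 < ε) (hl : l = ε / 100) (h0 : 0 < p) (hn : 3 ≤ n) (hεn : 4 < ε * n)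
    (hΓ : Γ ≤ G) (hedges : (Γ.edgeSet.ncard : ℝ) ≤ 2 * δ * (n ^ 2 * p)) {S : Finset (Fin n)}
    (hS : (1 / 2 + ε / 4) * n ≤ #S) (hends : ∀ v ∈ S, (1 / 2 + ε / 4) * n ≤ #(ends Γ v)) :
    ∃ v ∈ S, ∃ w ∈ ends Γ v, (G \ H).Adj v w := by
  by_contra! hno
  let D : ℝ := (1 - 1 / 2 - ε) * (n * p) + 2 * p
  have hbad : (#{x | D < deg H x} : ℝ) ≤ 1 / 2 * n :=
    hH.card_lt_deg_le hn h0.le (by norm_num) le_rfl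
  let S' := {v ∈ S | (deg H v : ℝ) ≤ D}
  have hS' : ε / 4 * n ≤ #S' := by
    have hcard : #S ≤ #S' + #{x | D < deg H x} := by
      rw [← card_filter_add_card_filter_not fun v => (deg H v : ℝ) ≤ D]
      gcongr
      simp only [not_le]
      exact filter_subset_filter _ (subset_univ S)
    have : (#S : ℝ) ≤ #S' + #{x | D < deg H x} := mod_cast hcard
    linarith
  have hends' : ∀ v ∈ S', (n : ℝ) / 2 ≤ #(ends Γ v) := fun v hv =>
    le_trans (by nlinarith) (hends v (mem_filter.1 hv).1)
  have hlower := hG.le_pairCount_ends Γ hΓ hedges S' hS' hends'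
  have hupper : (pairCount G (pairSet S' (ends Γ)) : ℝ) ≤ #S' * D := by
    have hle := pairCount_pairSet_le_sum_deg (G := G) (H := H) (S := S') (T := ends Γ)
      fun v hv w hw hvw => by
        by_contra hHvw
        exact hno v (mem_filter.1 hv).1 w hw ⟨hvw, hHvw⟩
    refine (Nat.cast_le.2 hle).trans ?_
    rw [Nat.cast_sum, ← nsmul_eq_mul]
    exact sum_le_card_nsmul _ _ _ fun v hv => (mem_filter.1 hv).2
  have hpos : 0 < p * #S' := mul_pos h0 (lt_of_lt_of_le (by positivity) hS')
  have hcompare : (1 - 4 * l) * (n / 2 - 1) ≤ (1 / 2 - ε) * n + 2 := by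
    refine le_of_mul_le_mul_left ?_ hpos
    calc p * #S' * ((1 - 4 * l) * (n / 2 - 1)) = (1 - 4 * l) * p * (#S' * (n / 2 - 1)) := by ring
      _ ≤ #S' * D := hlower.trans hupper
      _ = p * #S' * ((1 / 2 - ε) * n + 2) := by ring
  nlinarith

theorem IsTypical.isHamiltonian_sdiff (hG : IsTypical G p ε l δ)
    (hc : ResilienceConstants ε l δ C) (hr : RotationConditions ε (6 / l) (2 / δ) κ (δ * p) n)
    (hp : C * log n ≤ p * n) (h1 : p ≤ 1) (hH : PosaFamily n p ε H) : (G \ H).IsHamiltonian := by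
  have hε := hc.eps_pos
  have hlog := hr.two_le_log
  have hn : 3 ≤ n := by
    have := log_le_sub_one_of_pos hr.card_pos
    exact_mod_cast (by linarith : (3 : ℝ) ≤ n)
  have hεn : 4 < ε * n := by nlinarith [hr.log_le, hr.eps_le]
  have h0 : 0 < p := pos_of_mul_pos_right hr.prob_pos hc.rate_pos.le
  obtain ⟨R, hRF, hR⟩ := hG.exists_isPseudorandom hc hH h0.le h1 hn (by linarith) hp
  have hRedges := hR.ncard_edgeSet_add_le hc h0.le (by linarith) hp
  refine isHamiltonian_of_boosters (a := (1 / 2 + ε / 4) * n) (by rwa [Fintype.card_fin]) ?_ hRF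
    (fun Γ m p hΓ hp hmax => hR.exists_card_heads_ge hr hΓ hp hmax)
    (fun Z hZ hZn => hR.exists_adj_notMem hr hZ (by rwa [Fintype.card_fin] at hZn))
    fun Γ hΓ hΓR S hS hends => hG.exists_adj_ends hH hε hc.error_eq h0 hn hεn
      (hΓ.trans sdiff_le) (le_trans ?_ hRedges) hS hends
  · rw [Fintype.card_fin]
    linarith
  · rw [Fintype.card_fin] at hΓR
    exact_mod_cast hΓR

end Resilience

/-- Theorem 1.2, resilience version of Pósa's theorem.
For every `ε > 0` there exists `C > 0` such that, whenever `p ≥ C log n / n`, a.a.s.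
for every subgraph `H ∈ H^ε_{n,p}(G_{n,p})` the graph `G_{n,p} ∖ H` is Hamiltonian. -/
theorem posa_resilience_hamiltonicity (ε : ℝ) (hε : 0 < ε) :
    ∃ C : ℝ, 0 < C ∧ ∀ η : ℝ, 0 < η → ∃ N : ℕ, ∀ n : ℕ, N ≤ n →
      ∀ p : ℝ, C * Real.log n / n ≤ p → p ≤ 1 →
        1 - η ≤ Pr n p (fun G =>
          ∀ H : SimpleGraph (Fin n), H ≤ G → PosaFamily n p ε H →
            (G \ H).IsHamiltonian) := by
  have hε₀ : 0 < min ε (1 / 10) := lt_min hε (by norm_num)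
  obtain ⟨l, δ, κ, C, hc, hrot⟩ := exists_resilienceConstants hε₀ (min_le_right _ _)
  refine ⟨C, hc.const_pos, fun η hη => ?_⟩
  obtain ⟨N, hN⟩ := eventually_atTop.1
    ((hrot.and (eventually_prob_not_isTypical_le hc hη)).and (eventually_gt_atTop 0))
  refine ⟨N, fun n hn p hCp hp1 => ?_⟩
  obtain ⟨⟨hrot, htypical⟩, hn0⟩ := hN n hn
  have hp : C * log n ≤ p * n := (div_le_iff₀ (Nat.cast_pos.2 hn0)).1 hCp
  have hp0 : 0 ≤ p := pos_of_mul_pos_right (hrot p hp).prob_pos hc.rate_pos.le |>.le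
  calc 1 - η ≤ 1 - prob ⊤ p (fun G => ¬ IsTypical G p (min ε (1 / 10)) l δ) :=
        sub_le_sub_left (htypical p hp0 hp1 hp) 1
    _ ≤ Pr n p _ := by
        rw [Pr_eq_prob]
        refine one_sub_prob_le hp0 hp1 fun G _ hG H _ hH => ?_
        convert (not_not.1 hG).isHamiltonian_sdiff hc (hrot p hp) hp hp1
          (hH.anti hp0 (min_le_left _ _))

end Resilience
end

section
/- For every 0 < ε < 10^{-6} there exists C > 0 such that, whenever C log n / n ≤ p ≤ 1/25, the binomial random graph G_{n,p} asymptotically almost surely is NOT ε-Chvátal-resilient with respect to containing a perfect matching; that is, a.a.s. there exists a subgraph H ∈ H^{ε,0}_{n,p}(G_{n,p}) such that G_{n,p} ∖ H has no perfect matching. -/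
/-!
A set `A` whose neighbourhood in `G \ H` has fewer than `|A|` elements obstructs a perfect matching.
Given `A ⊆ U` with `|Uᶜ| < |A|`, such an `H` consists of the edges of `G` between `A` and `U`: its
vertices outside `U` are isolated, those of `A` have degree at most about `|U|p`, and all others
have degree at most about `|A|p`.

Since `|A|` vertices have large degree, the Chvátal condition with shift `s` at `i ≤ |A|` requires
`|A| + s + 1` vertices of low degree, whereas `Uᶜ` supplies only `|A| - 1`. The missing ones are
`s + 2` further vertices of `U`, made isolated in `H` by choosing `A` outside their neighbourhoods.
The vertices lost in this way amount to a fraction of about `(s / 2 + 1) * p` of all vertices.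

All this takes place within a half `A₀` of `U`, where `|A₀|` is slightly below `n / 2`. That the
degrees into `U` and `A₀` are as expected is Chernoff's inequality.
-/

open Filter Real

namespace Resilience

variable {V : Type*}

open MeasureTheory ProbabilityTheory
open scoped Finset Topology unitInterval

section RandomSets

variable {ι : Type*} (u : Set ι) (p : I)

lemma map_mem_setBernoulli (i : ι) :
    (setBernoulli u p).map (fun s ↦ i ∈ s) =
      unitInterval.toNNReal p • Measure.dirac (i ∈ u) +
        unitInterval.toNNReal (σ p) • Measure.dirac False := by
  rw [setBernoulli_eq_map, Measure.map_map (by fun_prop) (by fun_prop)]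
  exact Measure.infinitePi_map_eval _ i

lemma iIndepFun_mem_setBernoulli : iIndepFun (fun i s ↦ i ∈ s) (setBernoulli u p) := by
  rw [iIndepFun_iff_map_fun_eq_infinitePi_map (by fun_prop)]
  simp_rw [map_mem_setBernoulli]
  rw [setBernoulli_eq_map, Measure.map_map (by fun_prop) (by fun_prop)]
  exact Measure.map_id

lemma mgf_indicator_setBernoulli_le (i : ι) {t : ℝ} (ht : 0 ≤ t) :
    mgf (fun s : Set ι ↦ s.indicator 1 i) (setBernoulli u p) t ≤ exp (p * (exp t - 1)) := by
  classical
  calc mgf (fun s : Set ι ↦ s.indicator 1 i) (setBernoulli u p) t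
      = mgf (fun q ↦ if q then 1 else 0) ((setBernoulli u p).map (fun s ↦ i ∈ s)) t := by
        rw [mgf_map (by fun_prop) (by fun_prop)]
        simp [Function.comp_def, Set.indicator_apply]
    _ = p * exp (if i ∈ u then t else 0) + (1 - p) := by
        rw [map_mem_setBernoulli, mgf_add_measure (by simp) (by simp)]
        simp [mgf, NNReal.smul_def]
    _ ≤ p * exp t + (1 - p) := by
        gcongr
        · exact p.2.1
        · split_ifs <;> simp [ht]
    _ ≤ exp (p * (exp t - 1)) := by linarith [add_one_le_exp (p * (exp t - 1))]

lemma ncard_inter_eq_sum_indicator (s : Set ι) (T : Finset ι) :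
    ((s ∩ T).ncard : ℝ) = ∑ i ∈ T, s.indicator 1 i := by
  classical
  have hset : s ∩ T = ({i ∈ T | i ∈ s} : Finset ι) := by
    ext
    simp [and_comm]
  rw [hset, Set.ncard_coe_finset]
  simp [Set.indicator_apply]

lemma measurable_indicator_apply (i : ι) :
    Measurable fun s : Set ι ↦ s.indicator (1 : ι → ℝ) i := by
  classical
  exact (Measurable.of_discrete (f := fun q ↦ if q then (1 : ℝ) else 0)).comp
    (measurable_set_mem i)

lemma mgf_ncard_inter_setBernoulli_le (T : Finset ι) {t : ℝ} (ht : 0 ≤ t) :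
    mgf (fun s ↦ ((s ∩ T).ncard : ℝ)) (setBernoulli u p) t ≤ exp (#T * (p * (exp t - 1))) := by
  classical
  have hsum : (fun s : Set ι ↦ ((s ∩ T).ncard : ℝ)) = ∑ i ∈ T, fun s ↦ s.indicator 1 i := by
    ext s
    simp [ncard_inter_eq_sum_indicator]
  have hindep : iIndepFun (fun i (s : Set ι) ↦ s.indicator (1 : ι → ℝ) i) (setBernoulli u p) :=
    (iIndepFun_mem_setBernoulli u p).comp (fun _ q ↦ if q then 1 else 0) (fun _ ↦ by fun_prop)
  rw [hsum, hindep.mgf_sum measurable_indicator_apply, exp_nat_mul, ← Finset.prod_const]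
  exact Finset.prod_le_prod (fun _ _ ↦ mgf_nonneg) fun i _ ↦ mgf_indicator_setBernoulli_le u p i ht

lemma setBernoulli_real_ncard_inter_ge_le (T : Finset ι) {δ m : ℝ} (hδ : 0 ≤ δ) (hδ2 : δ ≤ 2)
    (hm : #T * (p : ℝ) ≤ m) :
    (setBernoulli u p).real {s | (1 + δ) * m ≤ (s ∩ T).ncard} ≤ exp (-(δ ^ 2 * m / 4)) := by
  have hint : Integrable (fun s ↦ exp (δ / 2 * (s ∩ T : Set ι).ncard)) (setBernoulli u p) := by
    refine integrable_exp_mul_of_le (b := #T) (δ / 2) (by positivity) ?_ (ae_of_all _ fun s ↦ ?_)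
    · simp_rw [ncard_inter_eq_sum_indicator]
      exact (Finset.measurable_sum T fun i _ ↦ measurable_indicator_apply i).aemeasurable
    · rw [← Set.ncard_coe_finset]
      exact_mod_cast Set.ncard_le_ncard Set.inter_subset_right T.finite_toSet
  have hexp : exp (δ / 2) - 1 ≤ δ / 2 + (δ / 2) ^ 2 := by
    have := abs_exp_sub_one_sub_id_le (x := δ / 2) (by rw [abs_of_nonneg] <;> linarith)
    linarith [le_of_abs_le this]
  have hm0 : 0 ≤ m := le_trans (mul_nonneg (Nat.cast_nonneg _) p.2.1) hm
  calc (setBernoulli u p).real {s | (1 + δ) * m ≤ (s ∩ T).ncard}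
      ≤ exp (-(δ / 2) * ((1 + δ) * m)) *
          mgf (fun s ↦ ((s ∩ T).ncard : ℝ)) (setBernoulli u p) (δ / 2) :=
        measure_ge_le_exp_mul_mgf _ (by positivity) hint
    _ ≤ exp (-(δ / 2) * ((1 + δ) * m)) * exp (m * (δ / 2 + (δ / 2) ^ 2)) := by
        gcongr
        refine (mgf_ncard_inter_setBernoulli_le u p T (by positivity)).trans ?_
        rw [← mul_assoc]
        gcongr
        exact sub_nonneg.2 (one_le_exp (by positivity))
    _ = exp (-(δ ^ 2 * m / 4)) := by
        rw [← exp_add]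
        ring_nf

end RandomSets

section DegreeInto

/-- The number of neighbours of `v` in `S`; for infinitely many of them, it takes the junk
value `0`. -/
noncomputable def degIn (G : SimpleGraph V) (v : V) (S : Set V) : ℕ := (G.neighborSet v ∩ S).ncard

lemma degIn_mono [Finite V] (G : SimpleGraph V) (v : V) {S T : Set V} (h : S ⊆ T) :
    degIn G v S ≤ degIn G v T :=
  Set.ncard_le_ncard (Set.inter_subset_inter_right _ h)

lemma binomialRandom_real_degIn_ge_le [Countable V] (p : I) (v : V) (S : Finset V) {δ m : ℝ}
    (hδ : 0 ≤ δ) (hδ2 : δ ≤ 2) (hm : #S * (p : ℝ) ≤ m) :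
    (SimpleGraph.binomialRandom V p).real {G | (1 + δ) * m ≤ degIn G v S} ≤
      exp (-(δ ^ 2 * m / 4)) := by
  classical
  set T : Finset (Sym2 V) := S.image fun w ↦ s(v, w)
  have hdeg (G : SimpleGraph V) : degIn G v S ≤ (G.edgeSet ∩ T).ncard := by
    refine Set.ncard_le_ncard_of_injOn (fun w ↦ s(v, w)) ?_ (fun _ _ _ _ ↦ Sym2.congr_right.1)
      (T.finite_toSet.inter_of_right _)
    rintro w ⟨hvw, hw⟩
    exact ⟨hvw, Finset.mem_image_of_mem _ hw⟩
  have hT : #T * (p : ℝ) ≤ m := le_trans (by gcongr; exacts [p.2.1, Finset.card_image_le]) hm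
  refine le_trans ?_ (setBernoulli_real_ncard_inter_ge_le Sym2.diagSetᶜ p T hδ hδ2 hT)
  rw [measureReal_def, SimpleGraph.binomialRandom_apply', ← measureReal_def]
  refine measureReal_mono ?_
  rintro _ ⟨G, hG, rfl⟩
  exact le_trans (Set.mem_ofPred.1 hG) (mod_cast hdeg G)

lemma binomialRandom_real_exists_degIn_ge_le [Fintype V] (p : I) (S : Finset V) {δ m : ℝ}
    (hδ : 0 ≤ δ) (hδ2 : δ ≤ 2) (hm : #S * (p : ℝ) ≤ m) :
    (SimpleGraph.binomialRandom V p).real {G | ∃ v, (1 + δ) * m ≤ degIn G v S} ≤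
      Fintype.card V * exp (-(δ ^ 2 * m / 4)) := by
  rw [Set.ofPred_exists, ← nsmul_eq_mul]
  exact (measureReal_iUnion_fintype_le _).trans <|
    Finset.sum_le_card_nsmul _ _ _ fun v _ ↦ binomialRandom_real_degIn_ge_le p v S hδ hδ2 hm

lemma exists_subset_card_eq_forall_not_adj {G : SimpleGraph V} {A₀ X : Finset V} {k : ℕ}
    {d : ℝ} (hd : ∀ x ∈ X, degIn G x A₀ ≤ d) (hk : k + #X * d ≤ #A₀) :
    ∃ A ⊆ A₀, #A = k ∧ ∀ x ∈ X, ∀ a ∈ A, ¬ G.Adj x a := by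
  classical
  set N : V → Finset V := fun x ↦ {a ∈ A₀ | G.Adj x a}
  have hN : ∀ x ∈ X, (#(N x) : ℝ) ≤ d := by
    intro x hx
    convert hd x hx
    rw [degIn, ← Set.ncard_coe_finset]
    congr 1
    ext
    simp [N, and_comm]
  have hunion : (#(X.biUnion N) : ℝ) ≤ #X * d := by
    calc (#(X.biUnion N) : ℝ) ≤ ∑ x ∈ X, (#(N x) : ℝ) := mod_cast Finset.card_biUnion_le
      _ ≤ #X * d := by simpa using Finset.sum_le_card_nsmul X _ d hN
  have hcard : k ≤ #(A₀ \ X.biUnion N) := by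
    have : (#A₀ : ℝ) ≤ #(A₀ \ X.biUnion N) + #(X.biUnion N) :=
      mod_cast Finset.card_le_card_sdiff_add_card
    exact_mod_cast (by linarith : (k : ℝ) ≤ #(A₀ \ X.biUnion N))
  obtain ⟨A, hA, rfl⟩ := Finset.exists_subset_card_eq hcard
  refine ⟨A, hA.trans Finset.sdiff_subset, rfl, fun x hx a ha hxa ↦ ?_⟩
  have ha' := Finset.mem_sdiff.1 (hA ha)
  exact ha'.2 (Finset.mem_biUnion.2 ⟨x, hx, Finset.mem_filter.2 ⟨ha'.1, hxa⟩⟩)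

end DegreeInto

section Between

variable {G : SimpleGraph V} {A U : Set V} {v : V}

lemma deg_between_le_degIn [Finite V] (hAU : A ⊆ U) : deg (G.between A U) v ≤ degIn G v U :=
  Set.ncard_le_ncard fun _ hw ↦ ⟨hw.1, hw.2.elim And.right fun h ↦ hAU h.2⟩

lemma deg_between_le_degIn_of_notMem [Finite V] (hv : v ∉ A) :
    deg (G.between A U) v ≤ degIn G v A :=
  Set.ncard_le_ncard fun _ hw ↦ ⟨hw.1, hw.2.elim (fun h ↦ absurd h.1 hv) And.right⟩

lemma deg_between_eq_zero_of_notMem (hAU : A ⊆ U) (hv : v ∉ U) : deg (G.between A U) v = 0 := by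
  have : (G.between A U).neighborSet v = ∅ := Set.eq_empty_of_forall_notMem fun _ hw ↦
    hw.2.elim (fun h ↦ hv (hAU h.1)) fun h ↦ hv h.1
  rw [deg, this, Set.ncard_empty]

lemma deg_between_eq_zero_of_forall_not_adj (hv : v ∉ A) (h : ∀ a ∈ A, ¬ G.Adj v a) :
    deg (G.between A U) v = 0 := by
  have : (G.between A U).neighborSet v = ∅ := Set.eq_empty_of_forall_notMem fun _ hw ↦
    hw.2.elim (fun h' ↦ hv h'.1) fun h' ↦ h _ h'.2 hw.1
  rw [deg, this, Set.ncard_empty]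

lemma isMatchingFree_of_ncard_lt {B : Set V} (hB : B.Finite) (hBA : B.ncard < A.ncard)
    (h : ∀ a ∈ A, ∀ b, G.Adj a b → b ∈ B) : G.IsMatchingFree := by
  intro M hM
  choose partner hpartner using fun v ↦ (hM.1 (hM.2 v)).exists
  refine hBA.not_ge (Set.ncard_le_ncard_of_injOn partner (fun a ha ↦ h a ha _ (hpartner a).adj_sub)
    (fun a _ b _ hab ↦ ?_) hB)
  exact (hM.1 (hM.2 (partner a))).unique (hpartner a).symm (hab ▸ (hpartner b).symm)

lemma isMatchingFree_sdiff_between [Finite V] (h : Uᶜ.ncard < A.ncard) :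
    (G \ G.between A U).IsMatchingFree :=
  isMatchingFree_of_ncard_lt Uᶜ.toFinite h fun _ ha _ hab hb ↦
    hab.2 ⟨hab.1, Or.inl ⟨ha, hb⟩⟩

end Between

section Chvatal

variable {n : ℕ}

lemma exists_perm_antitone_comp {α : Type*} [LinearOrder α] (f : Fin n → α) :
    ∃ e : Equiv.Perm (Fin n), Antitone (f ∘ e) :=
  ⟨Fin.revPerm.trans (Tuple.sort f), (Tuple.monotone_sort f).comp_antitone Fin.rev_anti⟩

lemma apply_le_of_card_le_of_antitone_comp {α : Type*} [Preorder α] {f : V → α} {v : Fin n → V}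
    (hv : v.Injective) (hf : Antitone (f ∘ v)) {S : Finset V} {c : α} (hS : ∀ u ∉ S, f u ≤ c)
    {j : Fin n} (hj : #S ≤ j) : f (v j) ≤ c := by
  have hcard : #S < #(Finset.Iic j) := by
    rw [Fin.card_Iic]
    lia
  obtain ⟨i, hi, hiS⟩ : ∃ i ∈ Finset.Iic j, v i ∉ S := by
    by_contra! h
    exact hcard.not_ge (Finset.card_le_card_of_injOn v h hv.injOn)
  exact (hf (Finset.mem_Iic.1 hi)).trans (hS _ hiS)

lemma chvatalFamily_of_deg_le {p ε : ℝ} (hp : 0 ≤ p) {s : ℕ} {H : SimpleGraph (Fin n)}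
    {A Z : Finset (Fin n)} (hAZ : #A + s < #Z) (hdeg : ∀ u, deg H u ≤ (1 - 2 * ε) * (n * p))
    (hA : ∀ u ∉ A, deg H u ≤ (1 / 2 - ε) * (n * p)) (hZ : ∀ u ∈ Z, deg H u = 0) :
    ChvatalFamily n p ε s H := by
  obtain ⟨v, hv⟩ := exists_perm_antitone_comp (deg H)
  have hvR : Antitone ((fun u ↦ (deg H u : ℝ)) ∘ v) := Nat.mono_cast.comp_antitone hv
  refine ⟨v, v.bijective, hv, fun i hi ↦ ?_⟩
  have hip : (i + 1 : ℝ) * p ≤ n / 2 * p := by gcongr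
  obtain hiA | hiA := le_or_gt #A i
  · left
    linarith [apply_le_of_card_le_of_antitone_comp v.injective hvR hA hiA]
  obtain hiε | hiε := le_total (i + 1 : ℝ) (ε * n)
  · left
    linarith [hdeg (v i), mul_le_mul_of_nonneg_right hiε hp]
  · right
    have hZc : ∀ u ∉ Zᶜ, (deg H u : ℝ) ≤ 0 := fun u hu ↦ by simp [hZ u (by simpa using hu)]
    refine (apply_le_of_card_le_of_antitone_comp v.injective hvR hZc ?_).trans ?_
    · rw [Finset.card_compl, Fintype.card_fin]
      dsimp only
      lia
    · linarith [mul_le_mul_of_nonneg_right hiε hp]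

lemma exists_chvatalFamily_isMatchingFree_sdiff {p ε : ℝ} (hp : 0 ≤ p) {s : ℕ}
    {G : SimpleGraph (Fin n)} {A₀ U X : Finset (Fin n)} (hA₀U : A₀ ⊆ U) (hXU : X ⊆ U)
    (hXA₀ : Disjoint X A₀) (hX : s + 1 < #X) (hU : ∀ v, degIn G v U ≤ (1 - 2 * ε) * (n * p))
    (hA₀ : ∀ v, degIn G v A₀ ≤ (1 / 2 - ε) * (n * p))
    (hcard : #Uᶜ + 1 + #X * ((1 / 2 - ε) * (n * p)) ≤ #A₀) :
    ∃ H ≤ G, ChvatalFamily n p ε s H ∧ (G \ H).IsMatchingFree := by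
  obtain ⟨A, hAA₀, hA, hXA⟩ :=
    exists_subset_card_eq_forall_not_adj (fun x _ ↦ hA₀ x) (k := #Uᶜ + 1) (mod_cast hcard)
  have hAU : (A : Set (Fin n)) ⊆ U := mod_cast hAA₀.trans hA₀U
  refine ⟨G.between A U, SimpleGraph.between_le,
    chvatalFamily_of_deg_le hp (A := A) (Z := Uᶜ ∪ X) ?_ (fun u ↦ ?_) (fun u hu ↦ ?_) ?_, ?_⟩
  · rw [Finset.card_union_of_disjoint (disjoint_compl_left.mono_right hXU)]
    lia
  · exact le_trans (mod_cast deg_between_le_degIn hAU) (hU u)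
  · refine le_trans ?_ (hA₀ u)
    exact_mod_cast (deg_between_le_degIn_of_notMem (mod_cast hu)).trans
      (degIn_mono G u (mod_cast hAA₀))
  · intro u hu
    obtain hu | hu := Finset.mem_union.1 hu
    · exact deg_between_eq_zero_of_notMem hAU (by simpa using hu)
    · exact deg_between_eq_zero_of_forall_not_adj
        (mod_cast fun huA ↦ Finset.disjoint_left.1 hXA₀ hu (hAA₀ huA)) (mod_cast hXA u hu)
  · apply isMatchingFree_sdiff_between
    rw [← Finset.coe_compl, Set.ncard_coe_finset, Set.ncard_coe_finset, hA]
    exact Nat.lt_succ_self _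

end Chvatal

section RandomGraph

variable {n : ℕ}

lemma exists_disjoint_subsets_card_eq [Fintype V] {a k m : ℕ} (ham : a + k ≤ m)
    (hm : m ≤ Fintype.card V) :
    ∃ A U X : Finset V, A ⊆ U ∧ X ⊆ U ∧ Disjoint X A ∧ #A = a ∧ #U = m ∧ #X = k := by
  classical
  obtain ⟨U, -, hU⟩ := Finset.exists_subset_card_eq (s := (Finset.univ : Finset V)) hm
  obtain ⟨A, hAU, hA⟩ := Finset.exists_subset_card_eq (s := U) (n := a) (by lia)
  obtain ⟨X, hX, hXk⟩ := Finset.exists_subset_card_eq (s := U \ A) (n := k)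
    (by rw [Finset.card_sdiff_of_subset hAU]; lia)
  exact ⟨A, U, X, hAU, hX.trans Finset.sdiff_subset, Finset.disjoint_of_subset_left hX
    Finset.sdiff_disjoint, hA, hU, hXk⟩

instance [Countable V] : MeasurableSingletonClass (SimpleGraph V) where
  measurableSet_singleton _ :=
    SimpleGraph.measurableEmbedding_edgeSet.measurableSet_image.1 (by simp)

lemma Pr_eq_binomialRandom_real (p : I) (Q : SimpleGraph (Fin n) → Prop) :
    Pr n p Q = (SimpleGraph.binomialRandom (Fin n) p).real {G | Q G} := by
  classical
  rw [Pr, ← Finset.sum_filter, ← Set.coe_toFinset {G | Q G}, ← sum_measureReal_singleton]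
  simp [measureReal_def, SimpleGraph.binomialRandom_singleton, weight]

lemma one_sub_le_Pr_exists_chvatalFamily {p : I} {ε δ : ℝ} {a s : ℕ} (hδ : 0 ≤ δ) (hδ2 : δ ≤ 2)
    (hs : s + 2 ≤ a) (han : 2 * a ≤ n) (haε : (1 + δ) * a ≤ (1 / 2 - ε) * n)
    (hna : n + 1 + (s + 2) * ((1 / 2 - ε) * (n * p)) ≤ 3 * a) :
    1 - 2 * n * exp (-(δ ^ 2 * (a * p) / 4)) ≤
      Pr n p fun G ↦ ∃ H ≤ G, ChvatalFamily n p ε s H ∧ (G \ H).IsMatchingFree := by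
  have hp : (0 : ℝ) ≤ p := p.2.1
  obtain ⟨A, U, X, hAU, hXU, hXA, hA, hU, hX⟩ :=
    exists_disjoint_subsets_card_eq (V := Fin n) (a := a) (k := s + 2) (m := 2 * a)
      (by lia) (by simpa using han)
  set μ := SimpleGraph.binomialRandom (Fin n) p
  set E := exp (-(δ ^ 2 * (a * p) / 4))
  have haεp : (1 + δ) * (a * p) ≤ (1 / 2 - ε) * (n * p) := by
    linarith [mul_le_mul_of_nonneg_right haε hp]
  have hAbad : μ.real {G | ∃ v, (1 + δ) * (a * p) ≤ degIn G v A} ≤ n * E := by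
    simpa using binomialRandom_real_exists_degIn_ge_le p A hδ hδ2 (m := a * p) (by rw [hA])
  have hUbad : μ.real {G | ∃ v, (1 + δ) * (2 * (a * p)) ≤ degIn G v U} ≤ n * E := by
    calc _ ≤ n * exp (-(δ ^ 2 * (2 * (a * p)) / 4)) := by
          simpa using binomialRandom_real_exists_degIn_ge_le p U hδ hδ2 (m := 2 * (a * p))
            (by rw [hU]; push_cast; linarith)
      _ ≤ n * E := by
          have : 0 ≤ δ ^ 2 * (a * p) := by positivity
          exact mul_le_mul_of_nonneg_left (exp_le_exp.2 (by linarith)) n.cast_nonneg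
  rw [Pr_eq_binomialRandom_real, ← compl_compl {G | _},
    probReal_compl_eq_one_sub (Set.toFinite _).measurableSet]
  suffices h : {G | ∃ H ≤ G, ChvatalFamily n p ε s H ∧ (G \ H).IsMatchingFree}ᶜ ⊆
      {G | ∃ v, (1 + δ) * (a * p) ≤ degIn G v A} ∪
        {G | ∃ v, (1 + δ) * (2 * (a * p)) ≤ degIn G v U} by
    linarith [measureReal_mono (μ := μ) h, measureReal_union_le (μ := μ)
      {G | ∃ v, (1 + δ) * (a * p) ≤ degIn G v A}
      {G | ∃ v, (1 + δ) * (2 * (a * p)) ≤ degIn G v U}]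
  rw [Set.compl_subset_comm]
  intro G hG
  simp only [Set.mem_compl_iff, Set.mem_union, Set.mem_ofPred_eq, not_or, not_exists,
    not_le] at hG
  refine exists_chvatalFamily_isMatchingFree_sdiff hp hAU hXU hXA (by lia)
    (fun v ↦ ?_) (fun v ↦ ?_) ?_
  · linarith [hG.2 v]
  · linarith [hG.1 v]
  · rw [Finset.card_compl, Fintype.card_fin, hU, hA, hX, Nat.cast_sub han]
    push_cast
    linarith

end RandomGraph

section Asymptotics

lemma exists_pos_eventually_exists_one_add_mul_le {β b k x : ℝ} (hβ : 0 ≤ β) (hk : 0 ≤ k)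
    (h : x < k * β) :
    ∃ δ : ℝ, 0 < δ ∧ δ ≤ 1 ∧
      ∀ᶠ n : ℕ in atTop, ∃ a : ℕ, (1 + δ) * a ≤ β * n ∧ x * n + b ≤ k * a := by
  have hδlim : Tendsto (fun δ ↦ k * (β / (1 + δ))) (𝓝[>] 0) (𝓝 (k * β)) := by
    have hcont : ContinuousAt (fun δ ↦ k * (β / (1 + δ))) 0 := by fun_prop (disch := norm_num)
    simpa using hcont.tendsto.mono_left nhdsWithin_le_nhds
  obtain ⟨δ, ⟨hδ, hδ1⟩, hxδ⟩ :=
    (Filter.Eventually.and (Ioc_mem_nhdsGT one_pos) (hδlim.eventually_const_lt h)).exists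
  have hlim : Tendsto (fun n : ℕ ↦ (k * (β / (1 + δ)) - x) * n) atTop atTop :=
    tendsto_natCast_atTop_atTop.const_mul_atTop (sub_pos.2 hxδ)
  refine ⟨δ, hδ, hδ1, ?_⟩
  filter_upwards [hlim.eventually_ge_atTop (b + k)] with n hn
  refine ⟨⌊β / (1 + δ) * n⌋₊, ?_, ?_⟩
  · calc (1 + δ) * ⌊β / (1 + δ) * n⌋₊ ≤ (1 + δ) * (β / (1 + δ) * n) := by
          gcongr
          exact Nat.floor_le (by positivity)
      _ = β * n := by field_simp
  · linarith [mul_le_mul_of_nonneg_left (Nat.sub_one_lt_floor (β / (1 + δ) * n)).le hk]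

lemma two_mul_exp_neg_le_two_div {n a : ℕ} {p δ : ℝ} (hδ : 0 < δ) (hn : n ≠ 0) (hna : n ≤ 3 * a)
    (hp : 24 / δ ^ 2 * log n / n ≤ p) :
    2 * n * exp (-(δ ^ 2 * (a * p) / 4)) ≤ 2 / n := by
  have hn' : (0 : ℝ) < n := by positivity
  have hlog : 2 * log n ≤ δ ^ 2 * (a * p) / 4 := by
    calc 2 * log n = δ ^ 2 * (n / 3 * (24 / δ ^ 2 * log n / n)) / 4 := by
          field_simp
          ring
      _ ≤ δ ^ 2 * (a * p) / 4 := by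
          have hna' : (n / 3 : ℝ) ≤ a := by
            rw [div_le_iff₀' three_pos]
            exact_mod_cast hna
          have : 0 ≤ 24 / δ ^ 2 * log n / n := by positivity
          gcongr
  calc 2 * n * exp (-(δ ^ 2 * (a * p) / 4)) ≤ 2 * n * exp (-(2 * log n)) := by gcongr
    _ = 2 / n := by
        rw [exp_neg, two_mul (log n), exp_add, exp_log hn']
        field_simp

end Asymptotics

theorem not_chvatal_resilient_matching_general {ε q : ℝ} {s : ℕ} (hε : 0 ≤ ε) (hε' : ε < 1 / 2)
    (h : 2 + (s + 2) * ((1 - 2 * ε) * q) < 3 * (1 - 2 * ε)) :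
    ∃ C : ℝ, 0 < C ∧ ∀ η : ℝ, 0 < η → ∃ N : ℕ, ∀ n : ℕ, N ≤ n →
      ∀ p : ℝ, C * log n / n ≤ p → p ≤ q →
        1 - η ≤ Pr n p fun G ↦ ∃ H ≤ G, ChvatalFamily n p ε s H ∧ (G \ H).IsMatchingFree := by
  have hβ : 0 ≤ 1 / 2 - ε := by linarith
  obtain ⟨δ, hδ, hδ1, hδn⟩ := exists_pos_eventually_exists_one_add_mul_le (b := 1) hβ zero_le_three
    (by linarith : 1 + (s + 2) * ((1 / 2 - ε) * q) < 3 * (1 / 2 - ε))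
  have hlim : Tendsto (fun n : ℕ ↦ 2 / (n : ℝ)) atTop (𝓝 0) :=
    tendsto_const_div_atTop_nhds_zero_nat 2
  refine ⟨24 / δ ^ 2, by positivity, fun η hη ↦ eventually_atTop.1 ?_⟩
  filter_upwards [hδn, hlim.eventually_le_const hη, eventually_ge_atTop (3 * (s + 2))]
    with n ⟨a, haε, hna⟩ hnη hn p hpn hpq
  have hp0 : 0 ≤ p := le_trans (by positivity) hpn
  have hpq' : (s + 2) * ((1 / 2 - ε) * p) ≤ (s + 2) * ((1 / 2 - ε) * q) := by gcongr
  have hp1 : p ≤ 1 := by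
    by_contra! hp1
    have : 2 * ((1 / 2 - ε) * 1) ≤ (s + 2) * ((1 / 2 - ε) * p) := by
      gcongr
      linarith [s.cast_nonneg (α := ℝ)]
    linarith
  have hna' : n + 1 + (s + 2) * ((1 / 2 - ε) * (n * p)) ≤ 3 * a := by
    linarith [mul_le_mul_of_nonneg_right hpq' n.cast_nonneg]
  have hn3a : n ≤ 3 * a := by
    have : 0 ≤ (s + 2) * ((1 / 2 - ε) * (n * p)) := by positivity
    exact_mod_cast (by linarith : (n : ℝ) ≤ 3 * a)
  have h2an : 2 * a ≤ n := by
    have : 0 ≤ δ * a := by positivity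
    have : 0 ≤ ε * n := by positivity
    exact_mod_cast (by linarith : (2 * a : ℝ) ≤ n)
  linarith [two_mul_exp_neg_le_two_div hδ (by lia) hn3a hpn, one_sub_le_Pr_exists_chvatalFamily
    (p := ⟨p, hp0, hp1⟩) hδ.le (by linarith) (by lia) h2an haε hna']

/-- Theorem 1.3.  For every `0 < ε < 10⁻⁶` there exists `C > 0` such
that, whenever `C log n / n ≤ p ≤ 1/25`, a.a.s. there is a subgraph
`H ∈ H^{ε,0}_{n,p}(G_{n,p})` such that `G_{n,p} ∖ H` has no perfect matching. -/
theorem not_chvatal_resilient_matching (ε : ℝ) (hε : 0 < ε) (hε' : ε < 1/1000000) :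
    ∃ C : ℝ, 0 < C ∧ ∀ η : ℝ, 0 < η → ∃ N : ℕ, ∀ n : ℕ, N ≤ n →
      ∀ p : ℝ, C * Real.log n / n ≤ p → p ≤ 1/25 →
        1 - η ≤ Pr n p (fun G =>
          ∃ H : SimpleGraph (Fin n), H ≤ G ∧ ChvatalFamily n p ε 0 H ∧
            ∀ M : (G \ H).Subgraph, ¬ M.IsPerfectMatching) :=
  not_chvatal_resilient_matching_general hε.le (by linarith) (by norm_num; linarith)

end Resilience
end
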